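/- The number of linked partitions of [n] with crossing number x, nesting number y, left-component set S and right-component set T equals the number of linked partitions of [n] with crossing number y, nesting number x, left-component set S and right-component set T. -/

import Mathlib

/-- A linked partition of `[n]` (elements modelled as `Fin n`): a collection of
nonempty blocks covering `[n]` such that any two distinct blocks are nearly
disjoint: every common element `t` is the minimum of one of the two blocks, that
block has size `> 1`, and `t` is not the minimum of the other block. -/
structure LinkedPartition (n : ℕ) where
  blocks : Finset (Finset (Fin n))
  nonempty : ∀ B ∈ blocks, B.Nonempty
  cover : ∀ i : Fin n, ∃ B ∈ blocks, i ∈ B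
  nearlyDisjoint : ∀ B ∈ blocks, ∀ C ∈ blocks, B ≠ C → ∀ t ∈ B ∩ C,
    ((∀ b ∈ B, t ≤ b) ∧ 1 < B.card ∧ ∃ c ∈ C, c < t) ∨
    ((∀ c ∈ C, t ≤ c) ∧ 1 < C.card ∧ ∃ b ∈ B, b < t)

namespace LinkedPartition

variable {n : ℕ}

/-- The standard representation: the pairs `(min B, b)` over all blocks `B` and all
`b ∈ B` with `b ≠ min B`. -/
def stdRep (P : LinkedPartition n) : Set (Fin n × Fin n) :=
  {p | ∃ B ∈ P.blocks, p.1 ∈ B ∧ p.2 ∈ B ∧ (∀ b ∈ B, p.1 ≤ b) ∧ p.1 < p.2}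

/-- The crossing number: the largest `k` such that the standard representation
contains pairs `(i_1,j_1), …, (i_k,j_k)` with `i_1 < ⋯ < i_k < j_1 < ⋯ < j_k`. -/
noncomputable def cross (P : LinkedPartition n) : ℕ :=
  sSup {k | ∃ f : Fin k → Fin n × Fin n, (∀ a, f a ∈ P.stdRep) ∧
    StrictMono (fun a => (f a).1) ∧ StrictMono (fun a => (f a).2) ∧
    ∀ a b : Fin k, (f a).1 < (f b).2}

/-- The nesting number: the largest `k` such that the standard representation
contains pairs `(i_1,j_1), …, (i_k,j_k)` with `i_1 < ⋯ < i_k < j_k < ⋯ < j_1`. -/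
noncomputable def nest (P : LinkedPartition n) : ℕ :=
  sSup {k | ∃ f : Fin k → Fin n × Fin n, (∀ a, f a ∈ P.stdRep) ∧
    StrictMono (fun a => (f a).1) ∧ StrictAnti (fun a => (f a).2) ∧
    ∀ a b : Fin k, (f a).1 < (f b).2}

/-- The set of left components of the pairs of the standard representation. -/
def compl (P : LinkedPartition n) : Set (Fin n) := {i | ∃ j, (i, j) ∈ P.stdRep}

/-- The set of right components of the pairs of the standard representation. -/
def compr (P : LinkedPartition n) : Set (Fin n) := {j | ∃ i, (i, j) ∈ P.stdRep}

end LinkedPartition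

namespace LPS

inductive St where
  | idle : St
  | grow : ℕ → St
  | stay : ℕ → St

/-- Top shape of a chain of shapes. -/
def top : List (ℕ → ℕ) → ℕ → ℕ
  | [] => fun _ => 0
  | ν :: _ => ν

def bump (ν : ℕ → ℕ) (r : ℕ) : ℕ → ℕ := fun i => if i = r then ν i + 1 else ν i

def app : St → (ℕ → ℕ) → ℕ → ℕ
  | .grow r, ν => bump ν r
  | _, ν => ν

def trans (hit : Prop) [Decidable hit] (s : St) (μ ν : ℕ → ℕ) : St :=
  match s with
  | .idle => if hit then (if ν 0 = μ 0 then .grow 0 else .stay 0) else .idle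
  | .grow r => if ν r = μ r then .grow r
      else if ν (r+1) = μ (r+1) then .grow (r+1) else .stay (r+1)
  | .stay r => if ν r = μ r then .stay r
      else if ν (r+1) = μ (r+1) ∧ μ (r+1) ≠ μ r then .grow (r+1) else .stay (r+1)

/-- Hecke insertion of the letter `x`, on chains of shapes. -/
def ins (x : ℕ) : List (ℕ → ℕ) → List (ℕ → ℕ) × St
  | [] => ([], .idle)
  | ν :: L =>
    let s := trans (L.length = x) (ins x L).2 (top L) ν
    (app s ν :: (ins x L).1, s)

def Rook (μ ν : ℕ → ℕ) : Prop := ∀ i, μ i ≤ ν i ∧ ν i ≤ μ i + 1 ∧ ν (i+1) ≤ μ i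

def Valid : List (ℕ → ℕ) → Prop
  | [] => True
  | ν :: L => Valid L ∧ Rook (top L) ν

/-- state is compatible with the (old) shape -/
def SV : St → (ℕ → ℕ) → Prop
  | .idle, _ => True
  | .grow r, lam => r = 0 ∨ ∃ k, r = k + 1 ∧ lam r < lam k
  | .stay r, lam => 0 < lam r

theorem Rook.anti {μ ν : ℕ → ℕ} (h : Rook μ ν) : ∀ i, ν (i+1) ≤ ν i :=
  fun i => le_trans (h i).2.2 (h i).1

theorem Valid.anti {L : List (ℕ → ℕ)} (h : Valid L) : Antitone (top L) := by
  apply antitone_nat_of_succ_le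
  cases L with
  | nil => intro i; simp [top]
  | cons ν L => exact Rook.anti h.2

theorem trans_fwd {hit : Prop} [Decidable hit] {s : St} {μ ν : ℕ → ℕ} (hR : Rook μ ν)
    (hμ : Antitone μ) (hs : SV s μ) :
    SV (trans hit s μ ν) ν ∧ Rook (app s μ) (app (trans hit s μ ν) ν) := by
  have hμ' : ∀ i, μ (i+1) ≤ μ i := fun i => hμ (Nat.le_succ i)
  cases s with
  | idle =>
    simp only [trans]
    split_ifs with h1 h2
    · refine ⟨Or.inl rfl, ?_⟩
      intro i; have := hR i; have := hμ' i; simp only [app, bump]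
      have := hR 0
      rcases i with _ | i <;> grind
    · refine ⟨?_, hR⟩
      have := hR 0; simp only [SV]; omega
    · exact ⟨trivial, hR⟩
  | grow r =>
    simp only [trans]
    simp only [SV] at hs
    split_ifs with h1 h2
    · constructor
      · simp only [SV]
        rcases hs with rfl | ⟨k, rfl, hk⟩
        · left; rfl
        · right; have := hR k; exact ⟨k, rfl, by omega⟩
      · intro i; have := hR i; simp only [app, bump]
        grind
    · have := hR r; have := hR (r+1); have := hμ' r
      constructor
      · simp only [SV]; right; exact ⟨r, rfl, by omega⟩
      · intro i; have := hR i; simp only [app, bump]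
        grind
    · have := hR r; have := hR (r+1); have := hμ' r
      constructor
      · simp only [SV]; omega
      · intro i; have := hR i; simp only [app, bump]
        grind
  | stay r =>
    simp only [trans]
    simp only [SV] at hs
    have := hR r; have := hR (r+1); have := hμ' r
    split_ifs with h1 h2
    · refine ⟨?_, hR⟩
      simp only [SV]; omega
    · constructor
      · simp only [SV]; right; exact ⟨r, rfl, by omega⟩
      · intro i; have := hR i; simp only [app, bump]
        grind
    · refine ⟨?_, hR⟩
      simp only [SV]; grind

theorem ins_length (x : ℕ) (L : List (ℕ → ℕ)) : (ins x L).1.length = L.length := by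
  induction L with
  | nil => rfl
  | cons ν L ih => simp [ins, ih]

theorem top_ins (x : ℕ) (L : List (ℕ → ℕ)) : top (ins x L).1 = app (ins x L).2 (top L) := by
  cases L with
  | nil => rfl
  | cons ν L => rfl

theorem ins_valid (x : ℕ) (L : List (ℕ → ℕ)) (h : Valid L) :
    Valid (ins x L).1 ∧ SV (ins x L).2 (top L) := by
  induction L with
  | nil => simp [ins, Valid, SV]
  | cons ν L ih =>
    obtain ⟨h1, h2⟩ := h
    obtain ⟨ih1, ih2⟩ := ih h1
    have := trans_fwd (hit := L.length = x) h2 h1.anti ih2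
    refine ⟨⟨ih1, ?_⟩, this.1⟩
    rw [top_ins]; exact this.2

theorem ins_idle (x : ℕ) (L : List (ℕ → ℕ)) :
    ((ins x L).2 = .idle ↔ L.length ≤ x) ∧ ((ins x L).2 = .idle → (ins x L).1 = L) := by
  induction L with
  | nil => simp [ins]
  | cons ν L ih =>
    simp only [ins, List.length_cons]
    cases h : (ins x L).2 with
    | idle =>
      have h1 := ih.1.1 h
      have h2 := ih.2 h
      simp only [trans]
      split_ifs <;> simp [app, h2] <;> omega
    | grow r =>
      have : ¬ L.length ≤ x := by rw [← ih.1, h]; simp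
      simp only [trans]
      split_ifs <;> simp [app] <;> omega
    | stay r =>
      have : ¬ L.length ≤ x := by rw [← ih.1, h]; simp
      simp only [trans]
      split_ifs <;> simp [app] <;> omega

/-- Labels: `(b, r, c)` marks the corner `(r,c)`; `b` tells whether the shape grew. -/
def Corner (σ : ℕ → ℕ) (l : Bool × ℕ × ℕ) : Prop := σ l.2.1 = l.2.2 + 1 ∧ σ (l.2.1 + 1) ≤ l.2.2

def pre (σ : ℕ → ℕ) (l : Bool × ℕ × ℕ) : ℕ → ℕ :=
  fun i => if l.1 = true ∧ i = l.2.1 then l.2.2 else σ i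

def Match (s : St) (l : Bool × ℕ × ℕ) (σ : ℕ → ℕ) : Prop :=
  if l.1 = true then s = .grow l.2.1 else ∃ r0, s = .stay r0 ∧ σ r0 = l.2.2 + 1

/-- backward local rule -/
def back (μ ρ : ℕ → ℕ) : Bool × ℕ × ℕ → Option (Bool × ℕ × ℕ)
  | (true, r, c) => if ρ r = μ r then some (true, r, c) else
      match r with
      | 0 => none
      | k + 1 => if ρ k = μ k then some (true, k, μ k - 1) else some (false, k, μ k - 1)
  | (false, r, c) => if ρ r = μ r then some (false, r, c) else
      match r with
      | 0 => none
      | k + 1 => if ρ k = ρ (k+1) then some (false, k, c) else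
          if ρ k = μ k then some (true, k, μ k - 1) else some (false, k, μ k - 1)

theorem pre_bump (ν : ℕ → ℕ) (r c : ℕ) (h : bump ν r r = c + 1) :
    ν = pre (bump ν r) (true, r, c) := by
  funext i
  simp only [bump, pre] at *
  grind

theorem back_unique {hit : Prop} [Decidable hit] {s : St} {μ ν : ℕ → ℕ} (hR : Rook μ ν)
    (hμ : Antitone μ) (hs : SV s μ) (l : Bool × ℕ × ℕ)
    (hc : Corner (app (trans hit s μ ν) ν) l)
    (hm : Match (trans hit s μ ν) l (app (trans hit s μ ν) ν)) :
    ν = pre (app (trans hit s μ ν) ν) l ∧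
    match back (app s μ) (app (trans hit s μ ν) ν) l with
    | none => s = .idle ∧ hit
    | some l0 => Match s l0 (app s μ) ∧ Corner (app s μ) l0 := by
  have hμ' : ∀ i, μ (i+1) ≤ μ i := fun i => hμ (Nat.le_succ i)
  have hν : Antitone ν := antitone_nat_of_succ_le hR.anti
  obtain ⟨b, r, c⟩ := l
  constructor
  · cases b with
    | true =>
      simp only [Match, if_true] at hm
      rw [hm] at hc ⊢
      exact pre_bump ν r c hc.1
    | false =>
      simp only [Match] at hm
      obtain ⟨r0, h1, -⟩ := hm
      rw [h1]; funext i; simp [app, pre]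
  · cases b with
    | true =>
      simp only [Match, if_true] at hm
      rw [hm] at hc ⊢
      simp only [app, Corner, bump] at hc
      cases s with
      | idle =>
        simp only [trans] at hm
        split_ifs at hm with h1 h2
        cases hm
        simp only [app, back, bump]
        simp [h1, h2]
      | grow k =>
        simp only [SV] at hs
        simp only [trans] at hm
        split_ifs at hm with h1 h2
        · cases hm
          simp only [app, back, bump]
          simp only [if_true, h1]
          have := hR r; have := hR (r+1); have := hμ' r
          simp at hc
          simp [Match, Corner, bump]
          omega
        · cases hm
          simp only [app, back, bump]
          have := hR k; have := hR (k+1); have := hμ' k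
          have e : ν k = μ k + 1 := by omega
          simp at hc
          simp [h2, e, Match, Corner, bump]
          try omega
      | stay k =>
        simp only [SV] at hs
        simp only [trans] at hm
        split_ifs at hm with h1 h2
        cases hm
        have := hR k; have := hR (k+1); have := hμ' k
        have e : ν k = μ k + 1 := by omega
        simp [h2.1, e, Match, Corner, app, back, bump]
        omega
    | false =>
      simp only [Match] at hm
      obtain ⟨r0, hm, hr0⟩ := hm
      rw [hm] at hc hr0 ⊢
      simp only [app, Corner] at hc hr0
      have hr0r : r0 ≤ r := by
        by_contra hh
        have := hν (show r + 1 ≤ r0 by omega)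
        omega
      cases s with
      | idle =>
        simp only [trans] at hm
        split_ifs at hm with h1 h2
        cases hm
        simp only [app, back]
        have h0 := hR 0
        have hr : r = 0 := by
          rcases r with _ | k
          · rfl
          · have := hR k; have := hμ (Nat.zero_le k); omega
        subst hr
        simp [h1, h2]
      | grow k =>
        simp only [SV] at hs
        simp only [trans] at hm
        split_ifs at hm with h1 h2
        cases hm
        have := hR k; have := hR (k+1); have := hμ' k
        have hr : r = k + 1 := by
          rcases Nat.eq_or_lt_of_le hr0r with h | h
          · omega
          · rcases r with _ | j
            · omega
            · have := hR j; have := hμ (show k + 1 ≤ j by omega); omega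
        subst hr
        have e : ν k = μ k + 1 := by omega
        have e' : ¬ ν k = ν (k+1) := by omega
        have f1 : bump μ k (k+1) = μ (k+1) := by simp [bump]
        have f2 : bump μ k k = μ k + 1 := by simp [bump]
        simp only [app, back, f1, f2, if_neg h2, if_neg e', if_pos e]
        simp only [Match, Corner, f1, f2, if_true, true_and]
        omega
      | stay k =>
        simp only [SV] at hs
        simp only [trans] at hm
        split_ifs at hm with h1 h2
        · cases hm
          simp only [app, back]
          split_ifs with h3
          · simp only [Match, Corner]
            have := hR (r+1); simp; grind
          · have hne : r0 ≠ r := by rintro rfl; exact h3 h1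
            rcases r with _ | j
            · omega
            · have := hμ (show r0 ≤ j by omega)
              have := hν (show r0 ≤ j by omega)
              have := hR j; have := hR (j+1)
              have := hν (Nat.le_succ j)
              have e : ν j = ν (j+1) := by omega
              simp [e, h3, Match, Corner]
              omega
        · cases hm
          have := hR k; have := hR (k+1); have := hμ' k
          have e : ν k = μ k + 1 := by omega
          simp only [app, back]
          by_cases h4 : ν (k+1) = μ (k+1)
          · have h5 : μ (k+1) = μ k := by
              by_contra h; exact h2 ⟨h4, h⟩
            split_ifs with h3
            · simp only [Match, Corner]
              have := hR (r+1); simp; grind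
            · have hne : k + 1 ≠ r := by rintro rfl; exact h3 h4
              rcases r with _ | j
              · omega
              · have := hμ (show k + 1 ≤ j by omega)
                have := hν (show k + 1 ≤ j by omega)
                have := hR j; have := hR (j+1)
                have := hν (Nat.le_succ j)
                have e : ν j = ν (j+1) := by omega
                simp [e, h3, Match, Corner]
                omega
          · have hr : r = k + 1 := by
              rcases Nat.eq_or_lt_of_le hr0r with h | h
              · omega
              · rcases r with _ | j
                · omega
                · have := hR j; have := hμ (show k + 1 ≤ j by omega); omega
            subst hr
            have e' : ¬ ν k = ν (k+1) := by omega
            simp [h4, e', Match, Corner]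
            have e'' : ¬ ν k = μ k := by omega
            simp [e'']
            omega

theorem back_exists {μ ρ : ℕ → ℕ} (hR : Rook μ ρ) (hμ : Antitone μ) (l : Bool × ℕ × ℕ)
    (hc : Corner ρ l) :
    match back μ ρ l with
    | none => Rook μ (pre ρ l) ∧ (∀ hit : Prop, ∀ [Decidable hit], hit →
        app (trans hit .idle μ (pre ρ l)) (pre ρ l) = ρ ∧
        Match (trans hit .idle μ (pre ρ l)) l ρ)
    | some l0 => Corner μ l0 ∧ Rook (pre μ l0) (pre ρ l) ∧
        ∀ s, Match s l0 μ → ∀ hit : Prop, ∀ [Decidable hit],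
          app (trans hit s (pre μ l0) (pre ρ l)) (pre ρ l) = ρ ∧
          Match (trans hit s (pre μ l0) (pre ρ l)) l ρ := by
  have hμ' : ∀ i, μ (i+1) ≤ μ i := fun i => hμ (Nat.le_succ i)
  have hρ : Antitone ρ := antitone_nat_of_succ_le hR.anti
  obtain ⟨b, r, c⟩ := l
  simp only [Corner] at hc
  cases b with
  | true =>
    simp only [back]
    by_cases h1 : ρ r = μ r
    · simp only [h1, if_true]
      refine ⟨?_, ?_, ?_⟩
      · simp only [Corner]; have := hR (r+1); omega
      · intro i
        have := hR i; have := hR r; have := hR (r+1)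
        simp only [pre]; grind
      · intro s hs hit _
        simp only [Match, if_true] at hs
        subst hs
        simp only [trans, pre]
        simp [app, Match]
        funext i; simp only [bump, pre]; grind
    · simp only [h1, if_false]
      rcases r with _ | k
      · simp only
        refine ⟨?_, ?_⟩
        · intro i
          have := hR i; have := hR 0
          simp only [pre]; grind
        · intro hit _ hhit
          have := hR 0
          have e : c = μ 0 := by omega
          simp [trans, pre, hhit, e, app, Match]
          funext i; simp only [bump, pre]; grind
      · simp only
        have := hR k; have := hR (k+1); have := hμ' k
        have := hR.anti k
        by_cases h2 : ρ k = μ k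
        · simp only [h2, if_true]
          refine ⟨?_, ?_, ?_⟩
          · simp only [Corner]; omega
          · intro i
            have := hR i
            simp only [pre]; grind
          · intro s hs hit _
            simp only [Match, if_true] at hs
            subst hs
            have e : ¬ ρ k = μ k - 1 := by omega
            have e' : c = μ (k+1) := by omega
            simp [trans, pre, e, e', app, Match]
            funext i; simp only [bump, pre]; grind
        · simp only [h2, if_false]
          refine ⟨?_, ?_, ?_⟩
          · simp only [Corner]; omega
          · intro i
            have := hR i
            simp only [pre]; grind
          · intro s hs hit _
            simp only [Match] at hs
            obtain ⟨r0, rfl, hr0⟩ := hs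
            have : r0 = k := by
              rcases lt_trichotomy r0 k with h | h | h
              · rcases k with _ | j
                · omega
                · have := hR j; have := hμ (show r0 ≤ j by omega); have := hμ' j; omega
              · exact h
              · have := hμ (show k + 1 ≤ r0 by omega); omega
            subst this
            have e' : c = μ (r0+1) := by omega
            have e2 : ¬ μ (r0+1) = μ r0 := by omega
            simp [trans, pre, h2, e', e2, app, Match]
            funext i; simp only [bump, pre]; grind
  | false =>
    have hp : pre ρ (false, r, c) = ρ := by funext i; simp [pre]
    rw [hp]
    simp only [back]
    by_cases h1 : ρ r = μ r
    · simp only [h1, if_true]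
      have hp' : pre μ (false, r, c) = μ := by funext i; simp [pre]
      rw [hp']
      refine ⟨?_, hR, ?_⟩
      · simp only [Corner]; have := hR (r+1); omega
      · intro s hs hit _
        simp only [Match] at hs
        obtain ⟨r0, rfl, hr0⟩ := hs
        try simp only at hr0
        have hr : r0 ≤ r := by
          by_contra hh
          have := hμ (show r + 1 ≤ r0 by omega); have := hR (r+1)
          omega
        have := hR r0; have := hR (r0+1)
        by_cases h3 : ρ r0 = μ r0
        · simp [trans, h3, app, Match]; omega
        · have : r0 ≠ r := by rintro rfl; exact h3 h1
          have := hμ (show r0 + 1 ≤ r by omega); have := hμ' r0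
          have e : μ (r0+1) = μ r0 := by omega
          simp [trans, h3, app, Match, e]; omega
    · simp only [h1, if_false]
      rcases r with _ | k
      · simp only
        refine ⟨hR, ?_⟩
        intro hit _ hhit
        simp only [trans, if_pos hhit, if_neg h1]
        simp [app, Match, hc.1]
      · simp only
        have := hR k; have := hR (k+1); have := hμ' k
        have := hR.anti k
        by_cases h2 : ρ k = ρ (k+1)
        · simp only [h2, if_true]
          have hp' : pre μ (false, k, c) = μ := by funext i; simp [pre]
          rw [hp']
          refine ⟨?_, hR, ?_⟩
          · simp only [Corner]; omega
          · intro s hs hit _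
            simp only [Match] at hs
            obtain ⟨r0, rfl, hr0⟩ := hs
            try simp only at hr0
            have hr : r0 ≤ k := by
              by_contra hh
              have := hμ (show k + 1 ≤ r0 by omega)
              omega
            have := hR r0; have := hR (r0+1)
            by_cases h3 : ρ r0 = μ r0
            · simp [trans, h3, app, Match]; omega
            · have : r0 ≠ k := by rintro rfl; omega
              have := hμ (show r0 + 1 ≤ k by omega); have := hμ' r0
              have e : μ (r0+1) = μ r0 := by omega
              simp [trans, h3, app, Match, e]; omega
        · simp only [h2, if_false]
          by_cases h3 : ρ k = μ k
          · simp only [h3, if_true]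
            refine ⟨?_, ?_, ?_⟩
            · simp only [Corner]; omega
            · intro i
              have := hR i
              simp only [pre]; grind
            · intro s hs hit _
              simp only [Match, if_true] at hs
              subst hs
              have e : ¬ ρ k = μ k - 1 := by omega
              simp [trans, pre, e, h1, app, Match]
              exact hc.1
          · simp only [h3, if_false]
            have hp' : pre μ (false, k, μ k - 1) = μ := by funext i; simp [pre]
            rw [hp']
            refine ⟨?_, hR, ?_⟩
            · simp only [Corner]; omega
            · intro s hs hit _
              simp only [Match] at hs
              obtain ⟨r0, rfl, hr0⟩ := hs
              have : r0 = k := by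
                rcases lt_trichotomy r0 k with h | h | h
                · rcases k with _ | j
                  · omega
                  · have := hR j; have := hμ (show r0 ≤ j by omega); have := hμ' j; omega
                · exact h
                · have := hμ (show k + 1 ≤ r0 by omega); omega
              subst this
              simp [trans, h3, h1, app, Match]
              exact hc.1

end LPS

namespace LPS

theorem Match.not_idle {l : Bool × ℕ × ℕ} {σ : ℕ → ℕ} (h : Match .idle l σ) : False := by
  unfold Match at h
  split_ifs at h
  obtain ⟨r0, h, _⟩ := h
  cases h

theorem inv_exists : ∀ (L' : List (ℕ → ℕ)), Valid L' → ∀ l, Corner (top L') l →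
    ∃ x L, Valid L ∧ L.length = L'.length ∧ (ins x L).1 = L' ∧ Match (ins x L).2 l (top L') ∧
      top L = pre (top L') l := by
  intro L'
  induction L' with
  | nil => intro _ l hc; simp [Corner, top] at hc
  | cons ρ N ih =>
    rintro ⟨hV, hR⟩ l hc
    have hb := back_exists hR hV.anti l hc
    cases hl : back (top N) ρ l with
    | none =>
      rw [hl] at hb
      obtain ⟨h1, h2⟩ := hb
      obtain ⟨h3, h4⟩ := h2 (N.length = N.length) rfl
      have hi := (ins_idle N.length N).1.2 le_rfl
      have hj := (ins_idle N.length N).2 hi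
      refine ⟨N.length, pre ρ l :: N, ⟨hV, h1⟩, rfl, ?_, ?_, rfl⟩
      · show (app (trans (N.length = N.length) (ins N.length N).2 (top N) (pre ρ l)) (pre ρ l)
            :: (ins N.length N).1) = _
        rw [hi, hj, h3]
      · show Match (trans (N.length = N.length) (ins N.length N).2 (top N) (pre ρ l)) l ρ
        rw [hi]; exact h4
    | some l0 =>
      rw [hl] at hb
      obtain ⟨h1, h2, h3⟩ := hb
      obtain ⟨x, M, hM, hlen, hins, hmat, htop⟩ := ih hV l0 h1
      obtain ⟨h4, h5⟩ := h3 _ hmat (M.length = x)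
      refine ⟨x, pre ρ l :: M, ⟨hM, by rw [htop]; exact h2⟩, by simp [hlen], ?_, ?_, rfl⟩
      · simp only [ins, hins, htop, h4]
      · simp only [ins, htop]; exact h5

theorem inv_unique (x₁ x₂ : ℕ) : ∀ (L₁ L₂ : List (ℕ → ℕ)) l, Valid L₁ → Valid L₂ →
    (ins x₁ L₁).1 = (ins x₂ L₂).1 → Corner (top (ins x₁ L₁).1) l →
    Match (ins x₁ L₁).2 l (top (ins x₁ L₁).1) → Match (ins x₂ L₂).2 l (top (ins x₂ L₂).1) →
    x₁ = x₂ ∧ L₁ = L₂ := by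
  intro L₁
  induction L₁ with
  | nil => intro L₂ l _ _ _ hc; simp [Corner, top, ins] at hc
  | cons ν₁ M₁ ih =>
    intro L₂ l hV₁ hV₂ he hc hm₁ hm₂
    cases L₂ with
    | nil => simp [ins] at he
    | cons ν₂ M₂ =>
      have he0 := he
      simp only [ins, List.cons.injEq] at he
      obtain ⟨he1, he2⟩ := he
      simp only [ins, top] at hc hm₁ hm₂
      have b1 := back_unique hV₁.2 hV₁.1.anti (ins_valid x₁ M₁ hV₁.1).2 l hc hm₁
      have b2 := back_unique hV₂.2 hV₂.1.anti (ins_valid x₂ M₂ hV₂.1).2 l (he1 ▸ hc) hm₂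
      rw [← top_ins] at b1 b2
      rw [he2, he1] at b1
      obtain ⟨b11, b12⟩ := b1
      obtain ⟨b21, b22⟩ := b2
      have hν : ν₁ = ν₂ := by rw [b11]; exact b21.symm
      cases hl : back (top (ins x₂ M₂).1) (app (trans (M₂.length = x₂) (ins x₂ M₂).2 (top M₂) ν₂) ν₂) l with
      | none =>
        rw [hl] at b12 b22
        have e1 := (ins_idle x₁ M₁).2 b12.1
        have e2 := (ins_idle x₂ M₂).2 b22.1
        have : M₁ = M₂ := by rw [← e1, he2, e2]
        refine ⟨?_, by rw [hν, this]⟩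
        rw [← b12.2, ← b22.2, this]
      | some l0 =>
        rw [hl] at b12 b22
        have := ih M₂ l0 hV₁.1 hV₂.1 he2 (he2 ▸ b12.2) (he2 ▸ b12.1) b22.1
        exact ⟨this.1, by rw [hν, this.2]⟩

/-- support of shapes -/
theorem Valid.supp : ∀ (L : List (ℕ → ℕ)), Valid L → ∀ i, L.length ≤ i → top L i = 0 := by
  intro L
  induction L with
  | nil => intro _ i _; rfl
  | cons ν L ih =>
    rintro ⟨h1, h2⟩ i hi
    simp only [List.length_cons] at hi
    obtain ⟨j, rfl⟩ : ∃ j, i = j + 1 := ⟨i - 1, by omega⟩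
    have := ih h1 j (by omega)
    have := h2 j
    simp only [top]; omega

/-- existence of label -/
theorem label_exists {s : St} {ν : ℕ → ℕ} {N : ℕ} (ha : Antitone ν) (hN : ∀ i, N ≤ i → ν i = 0)
    (hs : SV s ν) (hi : s ≠ .idle) : ∃ l, Corner (app s ν) l ∧ Match s l (app s ν) := by
  cases s with
  | idle => exact absurd rfl hi
  | grow r =>
    refine ⟨(true, r, ν r), ?_, ?_⟩
    · have := ha (Nat.le_succ r)
      simp [Corner, app, bump]; exact this
    · simp [Match]
  | stay r =>
    simp only [SV] at hs
    have hex : ∃ i, ν i < ν r := ⟨N, by rw [hN N le_rfl]; exact hs⟩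
    classical
    have h1 := Nat.find_spec hex
    have hpos : Nat.find hex ≠ 0 := by
      intro h
      rw [h] at h1
      have := ha (Nat.zero_le r); omega
    obtain ⟨k, hk⟩ := Nat.exists_eq_succ_of_ne_zero hpos
    have h2 := Nat.find_min hex (show k < Nat.find hex by omega)
    rw [hk] at h1
    have h3 : r ≤ k := by
      by_contra h
      have := ha (show k.succ ≤ r by omega); omega
    have := ha h3
    refine ⟨(false, k, ν r - 1), ?_, ?_⟩
    · simp [Corner, app]; simp only [Nat.succ_eq_add_one] at h1; omega
    · simp [Match, app]; omega

theorem label_unique {s : St} {σ : ℕ → ℕ} (ha : Antitone σ) {l l' : Bool × ℕ × ℕ}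
    (h1 : Corner σ l) (h2 : Match s l σ) (h3 : Corner σ l') (h4 : Match s l' σ) : l = l' := by
  obtain ⟨b, r, c⟩ := l
  obtain ⟨b', r', c'⟩ := l'
  simp only [Corner, Match] at *
  cases b <;> cases b'
  · simp at h2 h4
    obtain ⟨r0, rfl, h2⟩ := h2
    have hc : c = c' := by
      obtain ⟨r1, h5, h6⟩ := h4
      cases h5; omega
    subst hc
    have : r = r' := by
      rcases lt_trichotomy r r' with h | h | h
      · have := ha (show r + 1 ≤ r' by omega); omega
      · exact h
      · have := ha (show r' + 1 ≤ r by omega); omega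
    rw [this]
  · simp at h2 h4
    obtain ⟨r0, rfl, h2⟩ := h2
    cases h4
  · simp at h2 h4
    subst h2
    obtain ⟨r0, h, h2⟩ := h4
    cases h
  · simp at h2 h4
    subst h2
    cases h4
    have : c = c' := by omega
    rw [this]

noncomputable def label (x : ℕ) (L : List (ℕ → ℕ)) : Bool × ℕ × ℕ :=
  Classical.epsilon fun l => Corner (top (ins x L).1) l ∧ Match (ins x L).2 l (top (ins x L).1)

theorem label_spec {x : ℕ} {L : List (ℕ → ℕ)} (h : Valid L) (hx : x < L.length) :
    Corner (top (ins x L).1) (label x L) ∧ Match (ins x L).2 (label x L) (top (ins x L).1) := by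
  apply Classical.epsilon_spec (p := fun l => Corner (top (ins x L).1) l ∧ Match (ins x L).2 l (top (ins x L).1))
  rw [top_ins]
  apply label_exists h.anti (h.supp L) (ins_valid x L h).2
  rw [ne_eq, (ins_idle x L).1]; omega

theorem label_eq {x : ℕ} {L : List (ℕ → ℕ)} (h : Valid L) (hx : x < L.length) {l}
    (h1 : Corner (top (ins x L).1) l) (h2 : Match (ins x L).2 l (top (ins x L).1)) :
    label x L = l :=
  label_unique (ins_valid x L h).1.anti (label_spec h hx).1 (label_spec h hx).2 h1 h2

/-- the shape before the insertion -/
theorem top_pre {x : ℕ} {L : List (ℕ → ℕ)} (h : Valid L) (hx : x < L.length) :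
    top L = pre (top (ins x L).1) (label x L) := by
  obtain ⟨h1, h2⟩ := label_spec h hx
  cases L with
  | nil => simp at hx
  | cons ν L =>
    exact (back_unique h.2 h.1.anti (ins_valid x L h.1).2 _ h1 h2).1

end LPS

namespace LPS

def run : ℕ → List (Option ℕ) → List (ℕ → ℕ)
  | t, [] => List.replicate t (fun _ => 0)
  | t, none :: os => (run (t+1) os).tail
  | t, some x :: os => (ins x (run (t+1) os).tail).1

def Good : ℕ → List (Option ℕ) → Prop
  | _, [] => True
  | t, o :: os => (∀ x, o = some x → x < t) ∧ Good (t+1) os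

abbrev Datum := (ℕ → ℕ) × Option (Bool × ℕ × ℕ)

noncomputable def data : ℕ → List (Option ℕ) → List Datum
  | _, [] => []
  | t, none :: os => (top (run t (none :: os)), none) :: data (t+1) os
  | t, some x :: os =>
      (top (run t (some x :: os)), some (label x (run (t+1) os).tail)) :: data (t+1) os

def hd : List Datum → ℕ → ℕ
  | [] => fun _ => 0
  | d :: _ => d.1

def preO (σ : ℕ → ℕ) : Option (Bool × ℕ × ℕ) → ℕ → ℕ
  | none => σ
  | some l => pre σ l

def VD : List Datum → Prop
  | [] => True
  | d :: ds => Antitone d.1 ∧ (∀ l, d.2 = some l → Corner d.1 l) ∧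
      Rook (preO d.1 d.2) (hd ds) ∧ VD ds

theorem Valid.tail {L : List (ℕ → ℕ)} (h : Valid L) : Valid L.tail := by
  cases L with
  | nil => exact h
  | cons ν L => exact h.1

theorem valid_replicate (t : ℕ) : Valid (List.replicate t (fun _ => 0)) := by
  induction t with
  | zero => trivial
  | succ t ih =>
    refine ⟨ih, ?_⟩
    have : top (List.replicate t (fun _ => 0)) = fun _ => 0 := by cases t <;> rfl
    rw [this]; intro i; simp

theorem eq_replicate : ∀ (L : List (ℕ → ℕ)), Valid L → top L = (fun _ => 0) →
    L = List.replicate L.length (fun _ => 0) := by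
  intro L
  induction L with
  | nil => intros; rfl
  | cons ν L ih =>
    rintro ⟨h1, h2⟩ h
    simp only [top] at h
    subst h
    have : top L = fun _ => 0 := by funext i; have := h2 i; simp at this; exact this
    rw [List.length_cons, List.replicate_succ, ← ih h1 this]

theorem run_length : ∀ (os : List (Option ℕ)) t, (run t os).length = t := by
  intro os
  induction os with
  | nil => intro t; simp [run]
  | cons o os ih =>
    intro t
    cases o with
    | none => simp [run, ih]
    | some x => simp [run, ih, ins_length]

theorem run_valid : ∀ (os : List (Option ℕ)) t, Valid (run t os) := by
  intro os
  induction os with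
  | nil => intro t; exact valid_replicate t
  | cons o os ih =>
    intro t
    cases o with
    | none => exact (ih (t+1)).tail
    | some x => exact (ins_valid _ _ (ih (t+1)).tail).1

theorem hd_data (os : List (Option ℕ)) (t : ℕ) : hd (data t os) = top (run t os) := by
  rcases os with _ | ⟨_ | x, os⟩
  · simp only [data, hd, run]; cases t <;> rfl
  · rfl
  · rfl

theorem run_eq_cons (os : List (Option ℕ)) (t : ℕ) :
    run (t+1) os = hd (data (t+1) os) :: (run (t+1) os).tail := by
  rw [hd_data]
  have := run_length os (t+1)
  cases h : run (t+1) os with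
  | nil => rw [h] at this; simp at this
  | cons a b => rfl

theorem VD_data : ∀ (os : List (Option ℕ)) t, Good t os → VD (data t os) := by
  intro os
  induction os with
  | nil => intro t _; trivial
  | cons o os ih =>
    rintro t ⟨h1, h2⟩
    have hv := run_valid os (t+1)
    rw [run_eq_cons] at hv
    have hlen : (run (t+1) os).tail.length = t := by simp [run_length]
    cases o with
    | none =>
      refine ⟨(run_valid (none :: os) t).anti, by simp, hv.2, ih _ h2⟩
    | some x =>
      have hx : x < (run (t+1) os).tail.length := by rw [hlen]; exact h1 x rfl
      refine ⟨(run_valid (some x :: os) t).anti, ?_, ?_, ih _ h2⟩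
      · rintro l ⟨⟩
        exact (label_spec hv.1 hx).1
      · have := hv.2
        rw [top_pre hv.1 hx] at this
        exact this

theorem data_exists : ∀ (ds : List Datum) (t : ℕ) (L : List (ℕ → ℕ)), VD ds → Valid L →
    L.length = t → top L = hd ds →
    ∃ os, os.length = ds.length ∧ Good t os ∧ run t os = L ∧ data t os = ds := by
  intro ds
  induction ds with
  | nil =>
    intro t L _ hL hlen htop
    refine ⟨[], rfl, trivial, ?_, rfl⟩
    rw [eq_replicate L hL htop, hlen]; rfl
  | cons d ds ih =>
    obtain ⟨σ, o⟩ := d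
    rintro t L ⟨hanti, hc, hR, hVD⟩ hL hlen htop
    simp only [hd] at htop
    cases o with
    | none =>
      obtain ⟨os, h1, h2, h3, h4⟩ := ih (t+1) (hd ds :: L) hVD ⟨hL, by rw [htop]; exact hR⟩
        (by simp [hlen]) rfl
      have hr : run t (none :: os) = L := by simp [run, h3]
      refine ⟨none :: os, by simp [h1], ⟨by simp, h2⟩, hr, ?_⟩
      simp only [data, hr, htop, h4]
    | some l =>
      obtain ⟨x, M, hM, hMlen, hins, hmat, hMtop⟩ := inv_exists L hL l (by rw [htop]; exact hc l rfl)
      obtain ⟨os, h1, h2, h3, h4⟩ := ih (t+1) (hd ds :: M) hVD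
        ⟨hM, by rw [hMtop, htop]; exact hR⟩ (by simp [hMlen, hlen]) rfl
      have hr : run t (some x :: os) = L := by simp [run, h3, hins]
      have hx : x < M.length := by
        by_contra h
        have := (ins_idle x M).1.2 (by omega)
        rw [this] at hmat
        exact hmat.not_idle
      refine ⟨some x :: os, by simp [h1], ⟨?_, h2⟩, hr, ?_⟩
      · rintro y ⟨⟩; omega
      · have hl : label x (run (t+1) os).tail = l := by
          rw [h3]; simp only [List.tail_cons]
          apply label_eq hM hx
          · rw [hins, htop]; exact hc l rfl
          · rw [hins]; exact hmat
        simp only [data, hr, htop, h4, hl]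

theorem data_unique : ∀ (os os' : List (Option ℕ)) (t : ℕ), Good t os → Good t os' →
    run t os = run t os' → data t os = data t os' → os = os' := by
  intro os
  induction os with
  | nil =>
    intro os' t _ _ _ hd
    rcases os' with _ | ⟨_ | x, os'⟩
    · rfl
    · simp [data] at hd
    · simp [data] at hd
  | cons o os ih =>
    rintro (_ | ⟨o', os'⟩) t h1 h2 hr hdd
    · cases o <;> simp [data] at hdd
    · have hv := run_valid os (t+1)
      have hv' := run_valid os' (t+1)
      have hc := run_eq_cons os t
      have hc' := run_eq_cons os' t
      have hlen : (run (t+1) os).tail.length = t := by simp [run_length]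
      cases o <;> cases o' <;> simp only [data, List.cons.injEq, Prod.mk.injEq] at hdd
      · simp only [run] at hr
        rw [hr, hdd.2, ← hc'] at hc
        rw [ih os' (t+1) h1.2 h2.2 hc hdd.2]
      · simp at hdd
      · simp at hdd
      · rename_i x x'
        simp only [run] at hr
        simp only [Option.some.injEq] at hdd
        have hx : x < (run (t+1) os).tail.length := by rw [hlen]; exact h1.1 x rfl
        have hx' : x' < (run (t+1) os').tail.length := by
          simp only [List.length_tail, run_length]; exact h2.1 x' rfl
        have s1 := label_spec hv.tail hx
        have s2 := label_spec hv'.tail hx'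
        have := inv_unique x x' _ _ _ hv.tail hv'.tail hr s1.1 s1.2 (by rw [hdd.1.2]; exact s2.2)
        rw [this.2, hdd.2, ← hc'] at hc
        rw [ih os' (t+1) h1.2 h2.2 hc hdd.2, this.1]

end LPS

namespace LPS

def Shp (σ : ℕ → ℕ) : Prop := Antitone σ ∧ ∃ N, ∀ i, N ≤ i → σ i = 0

noncomputable def conj (σ : ℕ → ℕ) : ℕ → ℕ := fun j => sInf {i | σ i ≤ j}

theorem conj_spec {σ : ℕ → ℕ} (h : Shp σ) (i j : ℕ) : i < conj σ j ↔ j < σ i := by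
  obtain ⟨ha, N, hN⟩ := h
  constructor
  · intro hi
    have := Nat.notMem_of_lt_sInf hi
    simp only [Set.mem_setOf_eq] at this
    omega
  · intro hj
    have hne : {i | σ i ≤ j}.Nonempty := ⟨N, by simp [hN N le_rfl]⟩
    have := Nat.sInf_mem hne
    simp only [Set.mem_setOf_eq] at this
    by_contra hh
    have h2 := ha (show conj σ j ≤ i by omega)
    simp only [conj] at h2
    omega

theorem shape_ext {σ τ : ℕ → ℕ} (h : ∀ i j, j < σ i ↔ j < τ i) : σ = τ := by
  funext i
  have h1 := h i (σ i)
  have h2 := h i (τ i)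
  omega

theorem Shp.conj {σ : ℕ → ℕ} (h : Shp σ) : Shp (conj σ) := by
  constructor
  · intro a b hab
    by_contra hh
    have h1 := (conj_spec h (LPS.conj σ a) b).1 (by omega)
    have h2 := (conj_spec h (LPS.conj σ a) a).2 (by omega)
    omega
  · refine ⟨σ 0, fun j hj => ?_⟩
    by_contra hh
    have := (conj_spec h 0 j).1 (by omega)
    omega

theorem conj_conj {σ : ℕ → ℕ} (h : Shp σ) : conj (conj σ) = σ := by
  apply shape_ext
  intro i j
  rw [conj_spec h.conj, conj_spec h]

def tr (l : Bool × ℕ × ℕ) : Bool × ℕ × ℕ := (l.1, l.2.2, l.2.1)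

theorem corner_iff {σ : ℕ → ℕ} {l : Bool × ℕ × ℕ} : Corner σ l ↔
    l.2.2 < σ l.2.1 ∧ ¬ l.2.2 + 1 < σ l.2.1 ∧ ¬ l.2.2 < σ (l.2.1 + 1) := by
  unfold Corner; omega

theorem corner_tr {σ : ℕ → ℕ} (h : Shp σ) {l : Bool × ℕ × ℕ} (hc : Corner σ l) :
    Corner (conj σ) (tr l) := by
  rw [corner_iff] at *
  simp only [tr]
  rw [conj_spec h, conj_spec h, conj_spec h]
  tauto

theorem pre_iff {σ : ℕ → ℕ} {l : Bool × ℕ × ℕ} (hc : Corner σ l) (i j : ℕ) :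
    j < pre σ l i ↔ j < σ i ∧ ¬ (l.1 = true ∧ i = l.2.1 ∧ j = l.2.2) := by
  unfold Corner at hc
  unfold pre
  split_ifs with h
  · obtain ⟨h1, h2⟩ := h
    subst h2; simp only [h1, true_and]; omega
  · constructor
    · intro h1; exact ⟨h1, by tauto⟩
    · exact fun h => h.1

theorem pre_tr {σ : ℕ → ℕ} (h : Shp σ) {l : Bool × ℕ × ℕ} (hc : Corner σ l) (hp : Shp (pre σ l)) :
    pre (conj σ) (tr l) = conj (pre σ l) := by
  apply shape_ext
  intro i j
  rw [pre_iff (corner_tr h hc), conj_spec h, conj_spec hp, pre_iff hc]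
  simp only [tr]
  tauto

theorem rook_iff {μ ν : ℕ → ℕ} : Rook μ ν ↔ ∀ i j, (j < μ i → j < ν i) ∧ (j + 1 < ν i → j < μ i) ∧
    (j < ν (i+1) → j < μ i) := by
  constructor
  · intro h i j
    have := h i
    omega
  · intro h i
    have h1 := h i (ν i)
    have h2 := h i (μ i)
    omega

theorem rook_tr {μ ν : ℕ → ℕ} (hμ : Shp μ) (hν : Shp ν) (h : Rook μ ν) : Rook (conj μ) (conj ν) := by
  rw [rook_iff] at *
  intro i j
  rw [conj_spec hμ, conj_spec hν, conj_spec hν, conj_spec hν]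
  have := h j i
  tauto

noncomputable def trD (d : Datum) : Datum := (conj d.1, d.2.map tr)

theorem Rook.left {μ ν : ℕ → ℕ} (h : Rook μ ν) (hν : Shp ν) : Shp μ := by
  obtain ⟨_, N, hN⟩ := hν
  constructor
  · apply antitone_nat_of_succ_le
    intro i; have := h i; have := h (i+1); omega
  · refine ⟨N, fun i hi => ?_⟩
    have := h i; have := hN i hi; omega

theorem VD_shp : ∀ ds : List Datum, VD ds → Shp (hd ds) := by
  intro ds
  induction ds with
  | nil => intro _; exact ⟨fun _ _ _ => le_rfl, 0, fun _ _ => rfl⟩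
  | cons d ds ih =>
    rintro ⟨h1, h2, h3, h4⟩
    have hp := h3.left (ih h4)
    refine ⟨h1, ?_⟩
    obtain ⟨_, N, hN⟩ := hp
    obtain ⟨σ, o⟩ := d
    cases o with
    | none => exact ⟨N, hN⟩
    | some l =>
      refine ⟨N + l.2.1 + 1, fun i hi => ?_⟩
      have := hN i (by omega)
      simp only [preO, pre] at this
      rwa [if_neg (by rintro ⟨_, h⟩; omega)] at this

theorem conj_zero : conj (fun _ => 0) = fun _ => 0 := by
  have h : Shp (fun _ => 0) := ⟨fun _ _ _ => le_rfl, 0, fun _ _ => rfl⟩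
  apply shape_ext; intro i j; rw [conj_spec h]; simp

theorem hd_tr (ds : List Datum) : hd (ds.map trD) = conj (hd ds) := by
  cases ds with
  | nil => exact conj_zero.symm
  | cons d ds => rfl

theorem preO_tr {d : Datum} (h1 : Shp d.1) (h2 : ∀ l, d.2 = some l → Corner d.1 l)
    (h3 : Shp (preO d.1 d.2)) : preO (trD d).1 (trD d).2 = conj (preO d.1 d.2) := by
  obtain ⟨σ, o⟩ := d
  cases o with
  | none => rfl
  | some l => exact pre_tr h1 (h2 l rfl) h3

theorem VD_tr : ∀ ds : List Datum, VD ds → VD (ds.map trD) := by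
  intro ds
  induction ds with
  | nil => intro _; trivial
  | cons d ds ih =>
    intro hV
    have hs := VD_shp _ hV
    obtain ⟨h1, h2, h3, h4⟩ := hV
    have hs' := VD_shp _ h4
    refine ⟨(Shp.conj hs).1, ?_, ?_, ih h4⟩
    · intro l hl
      simp only [trD] at hl ⊢
      rw [Option.map_eq_some_iff] at hl
      obtain ⟨l', hl', rfl⟩ := hl
      exact corner_tr hs (h2 l' hl')
    · rw [hd_tr, preO_tr hs h2 (h3.left hs')]
      exact rook_tr (h3.left hs') hs' h3

theorem tr_tr_map : ∀ ds : List Datum, VD ds → (ds.map trD).map trD = ds := by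
  intro ds
  induction ds with
  | nil => intro _; rfl
  | cons d ds ih =>
    intro hV
    have hs := VD_shp _ hV
    simp only [List.map_cons]
    rw [ih hV.2.2.2]
    congr 1
    obtain ⟨σ, o⟩ := d
    simp only [trD, hd] at *
    rw [conj_conj hs]
    cases o <;> simp [tr]

/-- The involution on arc words. -/
theorem conj_word (os : List (Option ℕ)) (h : Good 0 os) :
    ∃ os', os'.length = os.length ∧ Good 0 os' ∧ data 0 os' = (data 0 os).map trD := by
  have hV := VD_data os 0 h
  have htop : hd (data 0 os) = fun _ => 0 := by
    rw [hd_data]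
    have := run_length os 0
    rw [List.length_eq_zero_iff.1 this]; rfl
  have hlen : ∀ (os : List (Option ℕ)) t, (data t os).length = os.length := by
    intro os
    induction os with
    | nil => intro t; rfl
    | cons o os ih => intro t; cases o <;> simp [data, ih]
  obtain ⟨os', h1, h2, h3, h4⟩ := data_exists ((data 0 os).map trD) 0 [] (VD_tr _ hV) trivial rfl (by
    rw [hd_tr, htop, conj_zero]; rfl)
  exact ⟨os', by rw [h1, List.length_map, hlen], h2, h4⟩

theorem word_inj (os os' : List (Option ℕ)) (h : Good 0 os) (h' : Good 0 os')
    (hd : data 0 os = data 0 os') : os = os' := by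
  apply data_unique os os' 0 h h' _ hd
  rw [List.length_eq_zero_iff.1 (run_length os 0), List.length_eq_zero_iff.1 (run_length os' 0)]

end LPS

namespace LPS

theorem map_isSome_data : ∀ (os : List (Option ℕ)) t,
    (data t os).map (fun d => d.2.isSome) = os.map Option.isSome := by
  intro os
  induction os with
  | nil => intro t; rfl
  | cons o os ih => intro t; cases o <;> simp [data, ih]

theorem map_isSome_tr (ds : List Datum) :
    (ds.map trD).map (fun d => d.2.isSome) = ds.map (fun d => d.2.isSome) := by
  rw [List.map_map]; congr 1; funext d; simp [trD]


/-- letter `v` is present -/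
def Pres : List (ℕ → ℕ) → ℕ → Prop
  | [], _ => False
  | ν :: L, v => (v = L.length ∧ ν ≠ top L) ∨ Pres L v

theorem Pres.lt : ∀ {L : List (ℕ → ℕ)} {v : ℕ}, Pres L v → v < L.length := by
  intro L
  induction L with
  | nil => intro v h; exact h.elim
  | cons ν L ih =>
    rintro v (⟨rfl, _⟩ | h)
    · simp
    · have := ih h; simp; omega

theorem app_ne {hit : Prop} [Decidable hit] {s : St} {μ ν : ℕ → ℕ} :
    app (trans hit s μ ν) ν ≠ app s μ ↔ ν ≠ μ ∨ (s = .idle ∧ hit) := by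
  cases s with
  | idle =>
    simp only [trans]
    split_ifs with h1 h2
    · simp only [h1, and_true, or_true, iff_true]
      intro h
      have := congrFun h 0
      simp [app, bump, h2] at this
    · simp only [h1, and_true, or_true, iff_true]
      intro h
      have := congrFun h 0
      simp only [app] at this
      exact h2 this
    · simp [h1, app]
  | grow r =>
    simp only [trans]
    split_ifs with h1 h2
    · simp only [reduceCtorEq, false_and, or_false, app]
      rw [not_iff_not]
      constructor
      · intro h; funext i
        have := congrFun h i
        simp only [bump] at this
        split_ifs at this with h3
        · subst h3; exact h1
        · exact this
      · rintro rfl; rfl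
    · have : ν ≠ μ := by rintro rfl; exact h1 rfl
      simp only [this, ne_eq, not_false_eq_true, true_or, iff_true]
      intro h
      have := congrFun h (r+1)
      simp [app, bump, h2] at this
    · have : ν ≠ μ := by rintro rfl; exact h1 rfl
      simp only [this, ne_eq, not_false_eq_true, true_or, iff_true]
      intro h
      have := congrFun h (r+1)
      simp [app, bump, h2] at this
  | stay r =>
    simp only [trans]
    split_ifs with h1 h2
    · simp [app]
    · have : ν ≠ μ := by rintro rfl; exact h1 rfl
      simp only [this, ne_eq, not_false_eq_true, true_or, iff_true]
      intro h
      have := congrFun h r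
      simp [app, bump, h1] at this
    · simp [app]

theorem pres_ins (x : ℕ) : ∀ (L : List (ℕ → ℕ)) v,
    Pres (ins x L).1 v ↔ Pres L v ∨ (v = x ∧ x < L.length) := by
  intro L
  induction L with
  | nil => intro v; simp [ins, Pres]
  | cons ν L ih =>
    intro v
    simp only [ins, Pres, ih, ins_length, top_ins, app_ne, (ins_idle x L).1, List.length_cons]
    have : L.length = x → L.length ≤ x := fun h => h.le
    constructor
    · rintro (⟨h1, h2 | ⟨h2, h3⟩⟩ | h | ⟨h, h'⟩)
      · exact Or.inl (Or.inl ⟨h1, h2⟩)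
      · right; omega
      · exact Or.inl (Or.inr h)
      · right; omega
    · rintro ((h | h) | ⟨h, h'⟩)
      · exact Or.inl ⟨h.1, Or.inl h.2⟩
      · exact Or.inr (Or.inl h)
      · by_cases h2 : L.length = x
        · exact Or.inl ⟨by omega, Or.inr ⟨h2.le, h2⟩⟩
        · right; right; omega

theorem pres_tail (L : List (ℕ → ℕ)) (v : ℕ) (h : v < L.tail.length) : Pres L.tail v ↔ Pres L v := by
  cases L with
  | nil => rfl
  | cons ν L =>
    simp only [List.tail_cons] at *
    simp only [Pres]
    constructor
    · exact Or.inr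
    · rintro (h2 | h2)
      · omega
      · exact h2

theorem pres_run : ∀ (os : List (Option ℕ)) t v, v < t → (Pres (run t os) v ↔ some v ∈ os) := by
  intro os
  induction os with
  | nil =>
    intro t v h
    simp only [run, List.not_mem_nil, iff_false]
    clear h
    induction t with
    | zero => exact id
    | succ t ih =>
      have : top (List.replicate t (fun _ => 0)) = fun _ => 0 := by cases t <;> rfl
      rw [List.replicate_succ]
      simp only [Pres, this]
      simpa using ih
  | cons o os ih =>
    intro t v h
    have hl : v < (run (t+1) os).tail.length := by simp [run_length]; exact h
    cases o with
    | none =>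
      simp only [run]
      rw [pres_tail _ _ hl, ih _ _ (by omega)]; simp
    | some x =>
      simp only [run]
      rw [pres_ins, pres_tail _ _ hl, ih _ _ (by omega)]
      simp only [List.mem_cons, Option.some.injEq]
      constructor
      · rintro (h | h)
        · exact Or.inr h
        · exact Or.inl h.1
      · rintro (h | h)
        · right; subst h; exact ⟨rfl, hl⟩
        · left; exact h

def sdata : List Datum → List Prop
  | [] => []
  | d :: ds => (preO d.1 d.2 ≠ hd ds) :: sdata ds

theorem sdata_tr : ∀ ds : List Datum, VD ds → sdata (ds.map trD) = sdata ds := by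
  intro ds
  induction ds with
  | nil => intro _; rfl
  | cons d ds ih =>
    intro hV
    have hs := VD_shp _ hV
    obtain ⟨h1, h2, h3, h4⟩ := hV
    have hs' := VD_shp _ h4
    have hp := h3.left hs'
    simp only [List.map_cons, sdata]
    rw [ih h4, hd_tr, preO_tr hs h2 hp]
    congr 1
    apply propext
    rw [not_iff_not]
    constructor
    · intro h; rw [← conj_conj hp, h, conj_conj hs']
    · intro h; rw [h]

theorem sdata_data (o : Option ℕ) (os : List (Option ℕ)) (t : ℕ) (h : Good t (o :: os)) :
    sdata (data t (o :: os)) = (some t ∈ os) :: sdata (data (t+1) os) := by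
  have key : top (run (t+1) os).tail ≠ hd (data (t+1) os) ↔ some t ∈ os := by
    rw [← pres_run os (t+1) t (by omega)]
    conv_rhs => rw [run_eq_cons]
    simp only [Pres]
    have : ¬ Pres (run (t+1) os).tail t := by
      intro h; have := h.lt; simp [run_length] at this
    simp only [this, or_false, List.length_tail, run_length, Nat.add_sub_cancel, true_and]
    exact ne_comm
  cases o with
  | none =>
    simp only [data, sdata, preO, run]
    rw [propext key]
  | some x =>
    have hv := (run_valid os (t+1)).tail
    have hx : x < (run (t+1) os).tail.length := by
      simp only [List.length_tail, run_length]; exact h.1 x rfl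
    simp only [data, sdata, preO, run]
    rw [← top_pre hv hx, propext key]

theorem not_mem_good : ∀ (os : List (Option ℕ)) t k, Good t os → some k ∈ os → k < t + os.length := by
  intro os
  induction os with
  | nil => intro t k _ h; simp at h
  | cons o os ih =>
    intro t k hg h
    simp only [List.mem_cons] at h
    rcases h with h | h
    · have := hg.1 k h.symm; simp; omega
    · have := ih (t+1) k hg.2 h; simp; omega

theorem mem_of_sdata : ∀ (os os' : List (Option ℕ)) t, Good t os → Good t os' →
    sdata (data t os) = sdata (data t os') → ∀ k, t ≤ k → (some k ∈ os ↔ some k ∈ os') := by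
  intro os
  induction os with
  | nil =>
    intro os' t _ h' hs
    cases os' with
    | nil => simp
    | cons o' os' => rw [sdata_data _ _ _ h'] at hs; simp [data, sdata] at hs
  | cons o os ih =>
    intro os' t h h' hs k hk
    cases os' with
    | nil => rw [sdata_data _ _ _ h] at hs; simp [data, sdata] at hs
    | cons o' os' =>
      rw [sdata_data _ _ _ h, sdata_data _ _ _ h', List.cons.injEq] at hs
      have e1 : some k ≠ o := by rintro rfl; have := h.1 k rfl; omega
      have e2 : some k ≠ o' := by rintro rfl; have := h'.1 k rfl; omega
      simp only [List.mem_cons, e1, e2, false_or]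
      rcases Nat.eq_or_lt_of_le hk with rfl | hk
      · exact iff_of_eq hs.1
      · exact ih os' (t+1) h.2 h'.2 hs.2 k hk


def lev : List (ℕ → ℕ) → ℕ → ℕ → ℕ
  | [], _ => fun _ => 0
  | ν :: L, q => if L.length < q then ν else lev L q

theorem lev_top (L : List (ℕ → ℕ)) (q : ℕ) (h : L.length ≤ q) : lev L q = top L := by
  cases L with
  | nil => rfl
  | cons ν L => simp only [List.length_cons] at h; simp only [lev, top]; rw [if_pos (by omega)]

theorem lev_tail (L : List (ℕ → ℕ)) (q : ℕ) (h : q ≤ L.tail.length) : lev L.tail q = lev L q := by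
  cases L with
  | nil => rfl
  | cons ν L =>
    simp only [List.tail_cons] at *
    simp only [lev]; rw [if_neg (by omega)]

theorem ins_row_zero (x : ℕ) : ∀ (L : List (ℕ → ℕ)), Valid L → x < L.length →
    ((ins x L).2 = .grow 0 ∧ top L 0 = lev L x 0) ∨
    ((ins x L).2 ≠ .grow 0 ∧ (ins x L).2 ≠ .idle ∧ lev L x 0 + 1 ≤ top L 0) := by
  intro L
  induction L with
  | nil => intro _ h; simp at h
  | cons ν L ih =>
    rintro ⟨hV, hR⟩ hx
    have h0 := hR 0
    have hl : lev (ν :: L) x = lev L x := by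
      simp only [List.length_cons] at hx
      simp only [lev]; rw [if_neg (by omega)]
    rw [hl, show top (ν :: L) = ν from rfl]
    simp only [ins]
    by_cases hx' : x < L.length
    · rcases ih hV hx' with ⟨h1, h2⟩ | ⟨h1, h2, h3⟩
      · rw [h1]
        simp only [trans]
        split_ifs with h4 h5
        · left; exact ⟨rfl, by omega⟩
        · right; refine ⟨by simp, by simp, by omega⟩
        · right; refine ⟨by simp, by simp, by omega⟩
      · right
        refine ⟨?_, ?_, by omega⟩
        · cases hs : (ins x L).2 with
          | idle => exact absurd hs h2
          | grow r =>
            rw [hs] at h1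
            simp only [trans]; split_ifs <;> simp
            simpa using h1
          | stay r => simp only [trans]; split_ifs <;> simp
        · cases hs : (ins x L).2 with
          | idle => exact absurd hs h2
          | grow r => simp only [trans]; split_ifs <;> simp
          | stay r => simp only [trans]; split_ifs <;> simp
    · have hx2 : L.length = x := by simp only [List.length_cons] at hx; omega
      have := (ins_idle x L).1.2 (by omega)
      rw [this, lev_top L x (by omega)]
      simp only [trans, if_pos hx2]
      split_ifs with h4
      · left; exact ⟨rfl, by omega⟩
      · right; refine ⟨by simp, by simp, by omega⟩

theorem lev_ins (x : ℕ) : ∀ (L : List (ℕ → ℕ)), Valid L → ∀ q, q ≤ L.length →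
    lev (ins x L).1 q 0 = if x < q then max (lev L q 0) (lev L x 0 + 1) else lev L q 0 := by
  intro L
  induction L with
  | nil => intro _ q hq; simp at hq; subst hq; simp [ins]
  | cons ν L ih =>
    intro hV q hq
    have h0 := hV.2 0
    by_cases hq' : q ≤ L.length
    · have := ih hV.1 q hq'
      have e1 : lev (ins x (ν :: L)).1 q = lev (ins x L).1 q := by
        simp only [ins, lev, ins_length]; rw [if_neg (by omega)]
      have e2 : lev (ν :: L) q = lev L q := by
        simp only [lev]; rw [if_neg (by omega)]
      rw [e1, e2, this]
      split_ifs with h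
      · have e3 : lev (ν :: L) x = lev L x := by
          simp only [lev]; rw [if_neg (by omega)]
        rw [e3]
      · rfl
    · have hq2 : q = L.length + 1 := by simp at hq; omega
      rw [lev_top _ q (by rw [ins_length]; simp; omega), lev_top _ q (by simp; omega), top_ins]
      split_ifs with h
      · rcases ins_row_zero x _ hV (by simp; omega) with ⟨h1, h2⟩ | ⟨h1, h2, h3⟩
        · rw [h1]; simp only [app, bump, if_true]; omega
        · have : app (ins x (ν :: L)).2 (top (ν :: L)) 0 = top (ν :: L) 0 := by
            cases hs : (ins x (ν :: L)).2 with
            | idle => rfl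
            | grow r =>
              rw [hs] at h1
              simp only [app, bump]
              rw [if_neg]; rintro rfl; exact h1 rfl
            | stay r => rfl
          rw [this]; omega
      · have := (ins_idle x (ν :: L)).1.2 (by simp; omega)
        rw [this]; rfl

def NI : List (Option ℕ) → ℕ → ℕ → Prop
  | [], _, N => N = 0
  | none :: os, q, N => NI os q N
  | some x :: os, q, N => NI os q N ∨ (x < q ∧ ∃ M, N = M + 1 ∧ NI os x M)

theorem NI_iff : ∀ (os : List (Option ℕ)) t, Good t os → ∀ q N, q ≤ t →
    (NI os q N ↔ N ≤ lev (run t os) q 0 ∨ N = 0) := by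
  intro os
  induction os with
  | nil =>
    intro t _ q N _
    have : ∀ t, lev (run t []) q 0 = 0 := by
      intro t
      simp only [run]
      induction t with
      | zero => rfl
      | succ t ih =>
        rw [List.replicate_succ]; simp only [lev]; split_ifs
        · rfl
        · exact ih
    rw [this]; simp [NI]
  | cons o os ih =>
    intro t hg q N hq
    have hl : (run (t+1) os).tail.length = t := by simp [run_length]
    have hv := (run_valid os (t+1)).tail
    cases o with
    | none =>
      simp only [NI, run]
      rw [lev_tail _ _ (by omega)]
      exact ih (t+1) hg.2 q N (by omega)
    | some x =>
      have hx := hg.1 x rfl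
      simp only [NI, run]
      rw [lev_ins x _ hv q (by omega), lev_tail _ _ (by omega), lev_tail _ _ (by omega),
        ih (t+1) hg.2 q N (by omega)]
      simp only [ih (t+1) hg.2 x _ (show x ≤ t+1 by omega)]
      split_ifs with h
      · constructor
        · rintro ((h | h) | ⟨_, M, rfl, h⟩)
          · left; omega
          · right; exact h
          · left; omega
        · rintro (h' | h')
          · by_cases h2 : N ≤ lev (run (t+1) os) q 0
            · left; left; exact h2
            · right; exact ⟨h, N - 1, by omega, by omega⟩
          · left; right; exact h'
      · simp [h]

end LPS

namespace LPS

def InRow : List (ℕ → ℕ) → ℕ → ℕ → Prop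
  | [], _, _ => False
  | ν :: L, i, a => (a = L.length ∧ ν i ≠ top L i) ∨ InRow L i a

theorem InRow.lt : ∀ {L : List (ℕ → ℕ)} {i a : ℕ}, InRow L i a → a < L.length := by
  intro L
  induction L with
  | nil => intro i a h; exact h.elim
  | cons ν L ih =>
    rintro i a (⟨rfl, _⟩ | h)
    · simp
    · have := ih h; simp; omega

theorem blocked : ∀ (L : List (ℕ → ℕ)), Valid L → ∀ r, top L (r+1) = top L r →
    ∀ u, InRow L r u → ∃ b, InRow L (r+1) b ∧ u < b := by
  intro L
  induction L with
  | nil => intro _ r _ u h; exact h.elim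
  | cons ν L ih =>
    rintro ⟨hV, hR⟩ r he u hu
    rw [show top (ν :: L) = ν from rfl] at he
    have h1 := hR r
    have h2 := hR (r+1)
    rcases hu with ⟨rfl, hu⟩ | hu
    · omega
    · by_cases h3 : ν (r+1) = top L (r+1)
      · obtain ⟨b, hb, hub⟩ := ih hV r (by omega) u hu
        exact ⟨b, Or.inr hb, hub⟩
      · exact ⟨L.length, Or.inl ⟨rfl, h3⟩, hu.lt⟩

theorem inRow_pos : ∀ (L : List (ℕ → ℕ)), Valid L → ∀ i, (∃ a, InRow L i a) ↔ 0 < top L i := by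
  intro L
  induction L with
  | nil => intro _ i; simp [InRow, top]
  | cons ν L ih =>
    rintro ⟨hV, hR⟩ i
    have h1 := hR i
    have h2 := ih hV i
    rw [show top (ν :: L) = ν from rfl]
    constructor
    · rintro ⟨a, ⟨rfl, h⟩ | h⟩
      · omega
      · have := h2.1 ⟨a, h⟩; omega
    · intro h
      by_cases h3 : ν i = top L i
      · obtain ⟨a, ha⟩ := h2.2 (by omega)
        exact ⟨a, Or.inr ha⟩
      · exact ⟨L.length, Or.inl ⟨rfl, h3⟩⟩

theorem inRow_col : ∀ (L : List (ℕ → ℕ)), Valid L → ∀ i a, InRow L (i+1) a → ∃ b, b < a ∧ InRow L i b := by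
  intro L
  induction L with
  | nil => intro _ i a h; exact h.elim
  | cons ν L ih =>
    rintro ⟨hV, hR⟩ i a (⟨rfl, h⟩ | h)
    · have h1 := hR i
      have h2 := hR (i+1)
      obtain ⟨b, hb⟩ := (inRow_pos L hV i).2 (by omega)
      exact ⟨b, hb.lt, Or.inr hb⟩
    · obtain ⟨b, hb, hb'⟩ := ih hV i a h
      exact ⟨b, hb, Or.inr hb'⟩

/-- description of the carries of an insertion -/
structure Car (x : ℕ) (L L' : List (ℕ → ℕ)) (X : ℕ → ℕ) (g : ℕ → Bool) (m : ℕ) : Prop where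
  zero : X 0 = x
  lt : ∀ i, i ≤ m → X i < L.length
  next : ∀ i, i < m → X i < X (i+1) ∧ InRow L i (X (i+1)) ∧
    ∀ u, InRow L i u → X i < u → X (i+1) ≤ u
  last : ∀ u, InRow L m u → u ≤ X m
  above : ∀ i, m < i → ∀ a, InRow L' i a ↔ InRow L i a
  gr : ∀ i, i ≤ m → g i = true → ∀ a, InRow L' i a ↔
    (InRow L i a ∧ (i < m → a ≠ X (i+1))) ∨ a = X i
  st : ∀ i, i ≤ m → g i = false → (∀ a, InRow L' i a ↔ InRow L i a) ∧
    (InRow L i (X i) ∨ ∃ k, i = k + 1 ∧ InRow L' k (X i) ∧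
      ∀ u, InRow L' k u → u < X i → ∃ b, InRow L i b ∧ u < b ∧ b < X i)

def stOf (g : Bool) (m : ℕ) : St := if g then .grow m else .stay m

theorem app_stOf_ne {g : Bool} {m i : ℕ} {ν : ℕ → ℕ} (h : i ≠ m) : app (stOf g m) ν i = ν i := by
  cases g <;> simp [stOf, app, bump, h]

/-- the carry does not move -/
theorem Car.same {x : ℕ} {L L' : List (ℕ → ℕ)} {X : ℕ → ℕ} {g : ℕ → Bool} {m : ℕ} {ν : ℕ → ℕ}
    (h : Car x L L' X g m) (hlen : L'.length = L.length)
    (htop : top L' = app (stOf (g m) m) (top L)) (he : ν m = top L m) :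
    Car x (ν :: L) (app (stOf (g m) m) ν :: L') X g m := by
  have hrow : ∀ i, (app (stOf (g m) m) ν i ≠ top L' i ↔ ν i ≠ top L i) := by
    intro i
    rw [htop]
    by_cases hi : i = m
    · subst hi
      cases g i <;> simp [stOf, app, bump, he]
    · rw [app_stOf_ne hi, app_stOf_ne hi]
  have hR : ∀ i a, InRow (ν :: L) i a ↔ InRow L i a ∨ (a = L.length ∧ ν i ≠ top L i) := by
    intro i a; simp only [InRow]; tauto
  have hR' : ∀ i a, InRow (app (stOf (g m) m) ν :: L') i a ↔
      InRow L' i a ∨ (a = L.length ∧ ν i ≠ top L i) := by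
    intro i a; simp only [InRow, hlen, hrow]; tauto
  have hlt := h.lt
  refine ⟨h.zero, ?_, ?_, ?_, ?_, ?_, ?_⟩
  · intro i hi; have := hlt i hi; simp; omega
  · intro i hi
    obtain ⟨h1, h2, h3⟩ := h.next i hi
    refine ⟨h1, (hR _ _).2 (Or.inl h2), ?_⟩
    intro u hu hXu
    rcases (hR _ _).1 hu with hu | ⟨rfl, _⟩
    · exact h3 u hu hXu
    · exact (hlt (i+1) hi).le
  · intro u hu
    rcases (hR _ _).1 hu with hu | ⟨rfl, hu2⟩
    · exact h.last u hu
    · exact absurd he hu2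
  · intro i hi a
    rw [hR, hR', h.above i hi]
  · intro i hi hg a
    rw [hR, hR', h.gr i hi hg]
    have : ∀ a, a = L.length → i < m → a ≠ X (i+1) := by
      rintro _ rfl him; have := hlt (i+1) him; omega
    have := this a
    tauto
  · intro i hi hg
    obtain ⟨h1, h2⟩ := h.st i hi hg
    refine ⟨fun a => by rw [hR, hR', h1], ?_⟩
    rcases h2 with h2 | ⟨k, hk, h2, h3⟩
    · left; exact (hR _ _).2 (Or.inl h2)
    · right
      refine ⟨k, hk, (hR' _ _).2 (Or.inl h2), ?_⟩
      intro u hu hux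
      rcases (hR' _ _).1 hu with hu | ⟨rfl, hu⟩
      · obtain ⟨b, hb, hb'⟩ := h3 u hu hux
        exact ⟨b, (hR _ _).2 (Or.inl hb), hb'⟩
      · have := hlt i hi; omega

/-- the carry moves to the next row -/
theorem Car.move {x : ℕ} {L L' : List (ℕ → ℕ)} {X : ℕ → ℕ} {g : ℕ → Bool} {m : ℕ} {ν : ℕ → ℕ}
    (h : Car x L L' X g m) (hlen : L'.length = L.length) (hV : Valid L) (hRk : Rook (top L) ν)
    (htop : top L' = app (stOf (g m) m) (top L)) (he : ν m ≠ top L m) (g' : Bool)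
    (hg : g' = true → ν (m+1) = top L (m+1))
    (hs : g' = false → ν (m+1) ≠ top L (m+1) ∨ (g m = false ∧ top L (m+1) = top L m)) :
    Car x (ν :: L) (app (stOf g' (m+1)) ν :: L') (Function.update X (m+1) L.length)
      (Function.update g (m+1) g') (m+1) := by
  have hXo : ∀ i, i ≤ m → Function.update X (m+1) L.length i = X i := by
    intro i hi; rw [Function.update_of_ne (by omega)]
  have hXn : Function.update X (m+1) L.length (m+1) = L.length := by simp
  have hgo : ∀ i, i ≤ m → Function.update g (m+1) g' i = g i := by
    intro i hi; rw [Function.update_of_ne (by omega)]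
  have hgn : Function.update g (m+1) g' (m+1) = g' := by simp
  generalize Function.update X (m+1) L.length = X' at *
  generalize Function.update g (m+1) g' = G at *
  have hR : ∀ i a, InRow (ν :: L) i a ↔ InRow L i a ∨ (a = L.length ∧ ν i ≠ top L i) := by
    intro i a; simp only [InRow]; tauto
  have hR' : ∀ i a, InRow (app (stOf g' (m+1)) ν :: L') i a ↔
      InRow L' i a ∨ (a = L.length ∧ app (stOf g' (m+1)) ν i ≠ top L' i) := by
    intro i a; simp only [InRow, hlen]; tauto
  have hrow : ∀ i, i ≠ m → i ≠ m + 1 →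
      (app (stOf g' (m+1)) ν i ≠ top L' i ↔ ν i ≠ top L i) := by
    intro i h1 h2
    rw [htop, app_stOf_ne h1, app_stOf_ne h2]
  have hlt := h.lt
  have hm := hRk m
  have hm1 := hRk (m+1)
  refine ⟨by rw [hXo 0 (by omega)]; exact h.zero, ?_, ?_, ?_, ?_, ?_, ?_⟩
  · intro i hi
    rcases Nat.lt_or_ge m i with hi' | hi'
    · obtain rfl : i = m + 1 := by omega
      rw [hXn]; simp
    · rw [hXo i hi']; have := hlt i hi'; simp; omega
  · intro i hi
    rcases Nat.lt_or_ge i m with hi' | hi'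
    · obtain ⟨h1, h2, h3⟩ := h.next i hi'
      rw [hXo i (by omega), hXo (i+1) (by omega)]
      refine ⟨h1, (hR _ _).2 (Or.inl h2), ?_⟩
      intro u hu hXu
      rcases (hR _ _).1 hu with hu | ⟨rfl, _⟩
      · exact h3 u hu hXu
      · exact (hlt (i+1) hi').le
    · obtain rfl : i = m := by omega
      rw [hXo i le_rfl, hXn]
      refine ⟨hlt i le_rfl, (hR _ _).2 (Or.inr ⟨rfl, he⟩), ?_⟩
      intro u hu hXu
      rcases (hR _ _).1 hu with hu | ⟨rfl, _⟩
      · have := h.last u hu; omega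
      · exact le_rfl
  · intro u hu
    rw [hXn]
    have := hu.lt
    simp only [List.length_cons] at this; omega
  · intro i hi a
    rw [hR, hR', hrow i (by omega) (by omega), h.above i (by omega)]
  · intro i hi hgi a
    rcases Nat.lt_or_ge m i with hi' | hi'
    · obtain rfl : i = m + 1 := by omega
      rw [hgn] at hgi
      subst hgi
      have e := hg rfl
      have e2 : app (stOf true (m+1)) ν (m+1) ≠ top L' (m+1) := by
        rw [htop, app_stOf_ne (i := m+1) (m := m) (by omega)]
        simp [stOf, app, bump, e]
      rw [hR, hR', hXn, h.above (m+1) (by omega)]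
      simp [e, e2]
    · rw [hgo i hi'] at hgi
      rw [hR, hR', hXo i hi', h.gr i hi' hgi]
      rcases Nat.lt_or_ge i m with him | him
      · rw [hrow i (by omega) (by omega), hXo (i+1) (by omega)]
        have : a = L.length → a ≠ X (i+1) := by
          rintro rfl; have := hlt (i+1) him; omega
        simp only [him, forall_const, show i < m + 1 by omega]
        tauto
      · obtain rfl : i = m := by omega
        have e2 : app (stOf g' (i+1)) ν i = top L' i := by
          rw [htop, app_stOf_ne (by omega), hgi]
          simp [stOf, app, bump]; omega
        rw [hXn]
        have : InRow L i a → a ≠ L.length := fun h => h.lt.ne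
        constructor
        · rintro ((⟨h1, _⟩ | h1) | ⟨_, h1⟩)
          · exact Or.inl ⟨Or.inl h1, fun _ => this h1⟩
          · exact Or.inr h1
          · exact absurd e2 h1
        · rintro (⟨h1 | h1, h2⟩ | h1)
          · exact Or.inl (Or.inl ⟨h1, fun h => absurd h (lt_irrefl _)⟩)
          · exact absurd h1.1 (h2 (by omega))
          · exact Or.inl (Or.inr h1)
  · intro i hi hgi
    rcases Nat.lt_or_ge m i with hi' | hi'
    · obtain rfl : i = m + 1 := by omega
      rw [hgn] at hgi
      subst hgi
      have e2 : app (stOf false (m+1)) ν (m+1) ≠ top L' (m+1) ↔ ν (m+1) ≠ top L (m+1) := by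
        rw [htop, app_stOf_ne (i := m+1) (m := m) (by omega)]
        simp [stOf, app]
      refine ⟨fun a => by rw [hR, hR', e2, h.above (m+1) (by omega)], ?_⟩
      rw [hXn]
      rcases hs rfl with h1 | ⟨h1, h2⟩
      · left; exact (hR _ _).2 (Or.inr ⟨rfl, h1⟩)
      · right
        refine ⟨m, rfl, ?_, ?_⟩
        · refine (hR' _ _).2 (Or.inr ⟨rfl, ?_⟩)
          rw [htop, app_stOf_ne (by omega), h1]
          simpa [stOf, app] using he
        · intro u hu huL
          rcases (hR' _ _).1 hu with hu | ⟨hu, _⟩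
          · rw [(h.st m le_rfl h1).1] at hu
            obtain ⟨b, hb, hub⟩ := blocked L hV m h2 u hu
            exact ⟨b, (hR _ _).2 (Or.inl hb), hub, hb.lt⟩
          · omega
    · rw [hgo i hi'] at hgi
      obtain ⟨h1, h2⟩ := h.st i hi' hgi
      have e2 : app (stOf g' (m+1)) ν i ≠ top L' i ↔ ν i ≠ top L i := by
        rcases Nat.lt_or_ge i m with him | him
        · exact hrow i (by omega) (by omega)
        · obtain rfl : i = m := by omega
          rw [htop, app_stOf_ne (by omega), hgi]; simp [stOf, app]
      refine ⟨fun a => by rw [hR, hR', e2, h1], ?_⟩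
      rw [hXo i hi']
      rcases h2 with h2 | ⟨k, hk, h2, h3⟩
      · left; exact (hR _ _).2 (Or.inl h2)
      · right
        refine ⟨k, hk, (hR' _ _).2 (Or.inl h2), ?_⟩
        intro u hu hux
        rcases (hR' _ _).1 hu with hu | ⟨rfl, hu⟩
        · obtain ⟨b, hb, hb'⟩ := h3 u hu hux
          exact ⟨b, (hR _ _).2 (Or.inl hb), hb'⟩
        · have := hlt i hi'; omega

theorem car_exists (x : ℕ) : ∀ (L : List (ℕ → ℕ)), Valid L → x < L.length →
    ∃ X g m, Car x L (ins x L).1 X g m ∧ (ins x L).2 = stOf (g m) m := by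
  intro L
  induction L with
  | nil => intro _ h; simp at h
  | cons ν L ih =>
    rintro ⟨hV, hRk⟩ hx
    by_cases hx' : x < L.length
    · obtain ⟨X, g, m, hc, hs⟩ := ih hV hx'
      have htop := top_ins x L
      rw [hs] at htop
      by_cases he : ν m = top L m
      · have ht : trans (L.length = x) (stOf (g m) m) (top L) ν = stOf (g m) m := by
          cases g m <;> simp [stOf, trans, he]
        refine ⟨X, g, m, ?_, ?_⟩
        · simp only [ins, hs, ht]
          exact hc.same (ins_length x L) htop he
        · simp only [ins, hs, ht]
      · obtain ⟨g', ht, hg, hs'⟩ : ∃ g' : Bool,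
            trans (L.length = x) (stOf (g m) m) (top L) ν = stOf g' (m+1) ∧
            (g' = true → ν (m+1) = top L (m+1)) ∧
            (g' = false → ν (m+1) ≠ top L (m+1) ∨ (g m = false ∧ top L (m+1) = top L m)) := by
          cases hgm : g m with
          | true =>
            by_cases h1 : ν (m+1) = top L (m+1)
            · exact ⟨true, by simp [stOf, trans, he, h1], fun _ => h1, by simp⟩
            · exact ⟨false, by simp [stOf, trans, he, h1], by simp, fun _ => Or.inl h1⟩
          | false =>
            by_cases h1 : ν (m+1) = top L (m+1) ∧ top L (m+1) ≠ top L m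
            · refine ⟨true, ?_, fun _ => h1.1, by simp⟩
              simp only [stOf]; simp [trans, he, h1.1, h1.2]
            · refine ⟨false, ?_, by simp, fun _ => by tauto⟩
              simp only [stOf]; simp [trans, he]; tauto
        refine ⟨Function.update X (m+1) L.length, Function.update g (m+1) g', m+1, ?_, ?_⟩
        · simp only [ins, hs, ht]
          exact hc.move (ins_length x L) hV hRk htop he g' hg hs'
        · simp only [ins, hs, ht]; simp
    · have hx2 : L.length = x := by simp only [List.length_cons] at hx; omega
      have hi := (ins_idle x L).1.2 (by omega)
      have hL := (ins_idle x L).2 hi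
      obtain ⟨g', ht, hg⟩ : ∃ g' : Bool, trans (L.length = x) .idle (top L) ν = stOf g' 0 ∧
          (g' = true ↔ ν 0 = top L 0) := by
        by_cases h1 : ν 0 = top L 0
        · exact ⟨true, by simp [stOf, trans, hx2, h1], by simp [h1]⟩
        · exact ⟨false, by simp [stOf, trans, hx2, h1], by simp [h1]⟩
      refine ⟨fun _ => x, fun _ => g', 0, ?_, ?_⟩
      · simp only [ins, hi, hL, ht]
        refine ⟨rfl, ?_, ?_, ?_, ?_, ?_, ?_⟩
        · intro i _; exact hx
        · intro i hi; omega
        · intro u hu; have := hu.lt; simp at this; omega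
        · intro i hi a
          simp only [InRow]; rw [app_stOf_ne (by omega)]
        · intro i hi hgi a
          obtain rfl : i = 0 := by omega
          subst hgi
          have := hg.1 rfl
          simp [InRow, stOf, app, bump, this, hx2]; tauto
        · intro i hi hgi
          obtain rfl : i = 0 := by omega
          subst hgi
          have : ν 0 ≠ top L 0 := by
            intro h; have := hg.2 h; simp at this
          simp [InRow, stOf, app, this, hx2]
      · simp only [ins, hi, ht]

end LPS

namespace LPS

def Mono (G : ℕ → ℕ → Prop) : Prop := ∀ q q' N, q ≤ q' → G q N → G q' N

def step (x : ℕ) (G : ℕ → ℕ → Prop) (q N : ℕ) : Prop := G q N ∨ (x < q ∧ ∃ M, N = M + 1 ∧ G x M)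

def Psi (R : ℕ → Prop) (G : ℕ → ℕ → Prop) (q N : ℕ) : Prop :=
  G q N ∨ ∃ a M, R a ∧ a < q ∧ N = M + 1 ∧ G a M

def Act (R : ℕ → ℕ → Prop) : ℕ → (ℕ → ℕ → Prop) → ℕ → ℕ → Prop
  | 0, G => G
  | i + 1, G => Psi (R i) (Act R i G)

theorem Mono.step {x : ℕ} {G : ℕ → ℕ → Prop} (h : Mono G) : Mono (step x G) := by
  rintro q q' N hq (h1 | ⟨h1, h2⟩)
  · exact Or.inl (h _ _ _ hq h1)
  · exact Or.inr ⟨by omega, h2⟩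

theorem Mono.psi {R : ℕ → Prop} {G : ℕ → ℕ → Prop} (h : Mono G) : Mono (Psi R G) := by
  rintro q q' N hq (h1 | ⟨a, M, h1, h2, h3⟩)
  · exact Or.inl (h _ _ _ hq h1)
  · exact Or.inr ⟨a, M, h1, by omega, h3⟩

theorem Mono.act {R : ℕ → ℕ → Prop} {G : ℕ → ℕ → Prop} (h : Mono G) : ∀ i, Mono (Act R i G) := by
  intro i
  induction i with
  | zero => exact h
  | succ i ih => exact ih.psi

theorem row_next {R R' : ℕ → Prop} {F : ℕ → ℕ → Prop} {X Y : ℕ} (hF : Mono F) (hXY : X < Y)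
    (hY : R Y) (hmin : ∀ u, R u → X < u → Y ≤ u)
    (hs : ∀ q N, X < q → F X N → Psi R' F q (N+1))
    (h1 : ∀ a, R' a → R a ∨ a = X) (h2 : ∀ a, R a → a ≠ Y → R' a) :
    Psi R (step X F) = step Y (Psi R' F) := by
  funext q N
  apply propext
  constructor
  · rintro ((h | ⟨hX, M, rfl, h⟩) | ⟨a, M, ha, haq, rfl, h | ⟨hX, M, rfl, h⟩⟩)
    · exact Or.inl (Or.inl h)
    · exact Or.inl (hs q M hX h)
    · by_cases haY : a = Y
      · subst haY
        exact Or.inr ⟨haq, M, rfl, Or.inl h⟩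
      · exact Or.inl (Or.inr ⟨a, M, h2 a ha haY, haq, rfl, h⟩)
    · have := hmin a ha hX
      exact Or.inr ⟨by omega, M + 1, rfl, hs Y M hXY h⟩
  · rintro ((h | ⟨a, M, ha, haq, rfl, h⟩) | ⟨hYq, M, rfl, h | ⟨a, M, ha, haY, rfl, h⟩⟩)
    · exact Or.inl (Or.inl h)
    · rcases h1 a ha with ha | rfl
      · exact Or.inr ⟨a, M, ha, haq, rfl, Or.inl h⟩
      · exact Or.inl (Or.inr ⟨haq, M, rfl, h⟩)
    · exact Or.inr ⟨Y, M, hY, hYq, rfl, Or.inl h⟩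
    · have haX : a ≤ X := by
        rcases h1 a ha with ha | rfl
        · by_contra hh
          have := hmin a ha (by omega); omega
        · exact le_rfl
      exact Or.inr ⟨Y, M + 1, hY, hYq, rfl, Or.inr ⟨hXY, M, rfl, hF _ _ _ haX h⟩⟩

theorem row_last {R R' : ℕ → Prop} {F : ℕ → ℕ → Prop} {X : ℕ}
    (hmax : ∀ u, R u → u ≤ X)
    (hs : ∀ q N, X < q → F X N → Psi R' F q (N+1))
    (h1 : ∀ a, R' a → R a ∨ a = X) (h2 : ∀ a, R a → R' a) :
    Psi R (step X F) = Psi R' F := by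
  funext q N
  apply propext
  constructor
  · rintro ((h | ⟨hX, M, rfl, h⟩) | ⟨a, M, ha, haq, rfl, h | ⟨hX, M, rfl, h⟩⟩)
    · exact Or.inl h
    · exact hs q M hX h
    · exact Or.inr ⟨a, M, h2 a ha, haq, rfl, h⟩
    · have := hmax a ha; omega
  · rintro (h | ⟨a, M, ha, haq, rfl, h⟩)
    · exact Or.inl (Or.inl h)
    · rcases h1 a ha with ha | rfl
      · exact Or.inr ⟨a, M, ha, haq, rfl, Or.inl h⟩
      · exact Or.inl (Or.inr ⟨haq, M, rfl, h⟩)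

theorem Car.subst {x : ℕ} {L L' : List (ℕ → ℕ)} {X : ℕ → ℕ} {g : ℕ → Bool} {m : ℕ}
    (h : Car x L L' X g m) (G : ℕ → ℕ → Prop) (i : ℕ) (hi : i ≤ m) (q N : ℕ) (hq : X i < q)
    (hF : Act (InRow L') i G (X i) N) : Psi (InRow L' i) (Act (InRow L') i G) q (N+1) := by
  cases hg : g i with
  | true => exact Or.inr ⟨X i, N, (h.gr i hi hg _).2 (Or.inr rfl), hq, rfl, hF⟩
  | false =>
    obtain ⟨h1, h2⟩ := h.st i hi hg
    rcases h2 with h2 | ⟨k, rfl, h2, h3⟩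
    · exact Or.inr ⟨X i, N, (h1 _).2 h2, hq, rfl, hF⟩
    · rcases hF with hF | ⟨u, M, hu, huX, rfl, hF⟩
      · exact Or.inl (Or.inr ⟨X (k+1), N, h2, hq, rfl, hF⟩)
      · obtain ⟨b, hb, hub, hbX⟩ := h3 u hu huX
        exact Or.inr ⟨b, M + 1, (h1 b).2 hb, by omega, rfl, Or.inr ⟨u, M, hu, hub, rfl, hF⟩⟩

theorem Car.new {x : ℕ} {L L' : List (ℕ → ℕ)} {X : ℕ → ℕ} {g : ℕ → Bool} {m : ℕ}
    (h : Car x L L' X g m) (i : ℕ) (hi : i ≤ m) (a : ℕ) (ha : InRow L' i a) :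
    InRow L i a ∨ a = X i := by
  cases hg : g i with
  | true => rcases (h.gr i hi hg a).1 ha with h | h <;> tauto
  | false => exact Or.inl (((h.st i hi hg).1 a).1 ha)

theorem Car.old {x : ℕ} {L L' : List (ℕ → ℕ)} {X : ℕ → ℕ} {g : ℕ → Bool} {m : ℕ}
    (h : Car x L L' X g m) (i : ℕ) (hi : i ≤ m) (a : ℕ) (ha : InRow L i a)
    (hn : i < m → a ≠ X (i+1)) : InRow L' i a := by
  cases hg : g i with
  | true => exact (h.gr i hi hg a).2 (Or.inl ⟨ha, hn⟩)
  | false => exact ((h.st i hi hg).1 a).2 ha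

theorem Car.act_le {x : ℕ} {L L' : List (ℕ → ℕ)} {X : ℕ → ℕ} {g : ℕ → Bool} {m : ℕ}
    (h : Car x L L' X g m) {G : ℕ → ℕ → Prop} (hG : Mono G) : ∀ i, i ≤ m →
    Act (InRow L) i (step x G) = step (X i) (Act (InRow L') i G) := by
  intro i
  induction i with
  | zero => intro _; rw [h.zero]; rfl
  | succ i ih =>
    intro hi
    obtain ⟨n1, n2, n3⟩ := h.next i (by omega)
    simp only [Act]
    rw [ih (by omega)]
    exact row_next (hG.act i) n1 n2 n3 (fun q N => h.subst G i (by omega) q N)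
      (h.new i (by omega)) (fun a ha hn => h.old i (by omega) a ha (fun _ => hn))

theorem Car.act_gt {x : ℕ} {L L' : List (ℕ → ℕ)} {X : ℕ → ℕ} {g : ℕ → Bool} {m : ℕ}
    (h : Car x L L' X g m) {G : ℕ → ℕ → Prop} (hG : Mono G) : ∀ i,
    Act (InRow L) (m + 1 + i) (step x G) = Act (InRow L') (m + 1 + i) G := by
  intro i
  induction i with
  | zero =>
    simp only [Act, Nat.add_zero]
    rw [h.act_le hG m le_rfl]
    exact row_last h.last (fun q N => h.subst G m le_rfl q N) (h.new m le_rfl)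
      (fun a ha => h.old m le_rfl a ha (fun h => absurd h (lt_irrefl _)))
  | succ i ih =>
    rw [← Nat.add_assoc]
    simp only [Act]
    rw [ih]
    congr 1
    funext a
    exact propext (h.above _ (by omega) a).symm

theorem act_mono {R : ℕ → ℕ → Prop} {G : ℕ → ℕ → Prop} {q N : ℕ} {i : ℕ} (h : Act R i G q N) (j : ℕ) :
    Act R (i + j) G q N := by
  induction j with
  | zero => exact h
  | succ j ih => exact Or.inl ih

theorem act_ins {x : ℕ} {L : List (ℕ → ℕ)} (hV : Valid L) (hx : x < L.length) {G : ℕ → ℕ → Prop}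
    (hG : Mono G) (q N : ℕ) :
    (∃ i, Act (InRow L) i (step x G) q N) ↔ ∃ i, Act (InRow (ins x L).1) i G q N := by
  obtain ⟨X, g, m, hc, -⟩ := car_exists x L hV hx
  constructor
  · rintro ⟨i, h⟩
    have := act_mono h (m+1)
    rw [Nat.add_comm, hc.act_gt hG] at this
    exact ⟨_, this⟩
  · rintro ⟨i, h⟩
    have := act_mono h (m+1)
    rw [Nat.add_comm, ← hc.act_gt hG] at this
    exact ⟨_, this⟩

theorem act_congr {R R' : ℕ → ℕ → Prop} {Q : ℕ} (h : ∀ i a, a < Q → (R i a ↔ R' i a)) (G : ℕ → ℕ → Prop) :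
    ∀ i q N, q ≤ Q → (Act R i G q N ↔ Act R' i G q N) := by
  intro i
  induction i with
  | zero => intros; rfl
  | succ i ih =>
    intro q N hq
    simp only [Act, Psi]
    rw [ih q N hq]
    constructor
    · rintro (h1 | ⟨a, M, h1, h2, h3, h4⟩)
      · exact Or.inl h1
      · exact Or.inr ⟨a, M, (h i a (by omega)).1 h1, h2, h3, (ih a M (by omega)).1 h4⟩
    · rintro (h1 | ⟨a, M, h1, h2, h3, h4⟩)
      · exact Or.inl h1
      · exact Or.inr ⟨a, M, (h i a (by omega)).2 h1, h2, h3, (ih a M (by omega)).2 h4⟩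

theorem inRow_tail (L : List (ℕ → ℕ)) (i v : ℕ) (h : v < L.tail.length) :
    InRow L.tail i v ↔ InRow L i v := by
  cases L with
  | nil => rfl
  | cons ν L =>
    simp only [List.tail_cons] at *
    simp only [InRow]
    constructor
    · exact Or.inr
    · rintro (h2 | h2)
      · omega
      · exact h2

def CA : List (Option ℕ) → (ℕ → ℕ → Prop) → ℕ → ℕ → Prop
  | [], G => G
  | none :: os, G => CA os G
  | some x :: os, G => CA os (step x G)

theorem CA_iff : ∀ (os : List (Option ℕ)) t, Good t os → ∀ G, Mono G → ∀ q N, q ≤ t →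
    (CA os G q N ↔ ∃ i, Act (InRow (run t os)) i G q N) := by
  intro os
  induction os with
  | nil =>
    intro t _ G _ q N _
    simp only [CA]
    have hno : ∀ i a, ¬ InRow (run t []) i a := by
      intro i a ha
      have := (inRow_pos _ (run_valid [] t) i).1 ⟨a, ha⟩
      simp only [run] at this
      cases t <;> simp [top, List.replicate_succ] at this
    constructor
    · intro h; exact ⟨0, h⟩
    · rintro ⟨i, h⟩
      induction i with
      | zero => exact h
      | succ i ih =>
        rcases h with h | ⟨a, M, h1, _⟩
        · exact ih h
        · exact absurd h1 (hno _ _)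
  | cons o os ih =>
    intro t hg G hG q N hq
    have hl : (run (t+1) os).tail.length = t := by simp [run_length]
    have hv := (run_valid os (t+1)).tail
    have hc : ∀ i G, Act (InRow (run (t+1) os)) i G q N ↔ Act (InRow (run (t+1) os).tail) i G q N := by
      intro i G
      apply act_congr (Q := t) _ _ _ _ _ hq
      intro i a ha
      exact (inRow_tail _ _ _ (by omega)).symm
    cases o with
    | none =>
      simp only [CA, run]
      rw [ih (t+1) hg.2 G hG q N (by omega)]
      simp only [hc]
    | some x =>
      have hx := hg.1 x rfl
      simp only [CA, run]
      rw [ih (t+1) hg.2 _ hG.step q N (by omega), ← act_ins hv (by omega) hG]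
      simp only [hc]

def G0 (_ N : ℕ) : Prop := N = 0

theorem act_G0_le {R : ℕ → ℕ → Prop} : ∀ i q N, Act R i G0 q N → N ≤ i := by
  intro i
  induction i with
  | zero => intro q N h; simp only [Act, G0] at h; omega
  | succ i ih =>
    rintro q N (h | ⟨a, M, _, _, rfl, h⟩)
    · have := ih _ _ h; omega
    · have := ih _ _ h; omega

theorem inRow_down {L : List (ℕ → ℕ)} (hV : Valid L) (M : ℕ) : ∀ j a, InRow L (M + j) a →
    ∃ b, b ≤ a ∧ InRow L M b := by
  intro j
  induction j with
  | zero => intro a h; exact ⟨a, le_rfl, h⟩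
  | succ j ih =>
    intro a h
    obtain ⟨b, hb, h⟩ := inRow_col L hV (M + j) a h
    obtain ⟨c, hc, h⟩ := ih b h
    exact ⟨c, by omega, h⟩

theorem act_G0 {L : List (ℕ → ℕ)} (hV : Valid L) (N : ℕ) :
    (∃ i, Act (InRow L) i G0 L.length N) ↔ N = 0 ∨ 0 < top L (N - 1) := by
  constructor
  · rintro ⟨i, h⟩
    have key : ∀ i q N, Act (InRow L) i G0 q N → N = 0 ∨ ∃ a, InRow L (N-1) a := by
      intro i
      induction i with
      | zero => intro q N h; exact Or.inl h
      | succ i ih =>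
        rintro q N (h | ⟨a, M, h1, _, rfl, h⟩)
        · exact ih _ _ h
        · right
          have := act_G0_le _ _ _ h
          obtain ⟨j, rfl⟩ := Nat.exists_eq_add_of_le this
          obtain ⟨b, _, hb⟩ := inRow_down hV M j a h1
          exact ⟨b, hb⟩
    rw [← inRow_pos L hV]
    exact key _ _ _ h
  · rintro (rfl | h)
    · exact ⟨0, rfl⟩
    · rcases N with _ | N
      · exact ⟨0, rfl⟩
      · rw [← inRow_pos L hV] at h
        obtain ⟨a, ha⟩ := h
        have key : ∀ N q a, InRow L N a → a < q → Act (InRow L) (N+1) G0 q (N+1) := by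
          intro N
          induction N with
          | zero => intro q a h1 h2; exact Or.inr ⟨a, 0, h1, h2, rfl, rfl⟩
          | succ N ih =>
            intro q a h1 h2
            obtain ⟨b, hb, h3⟩ := inRow_col L hV N a h1
            exact Or.inr ⟨a, N+1, h1, h2, rfl, ih a b h3 hb⟩
        exact ⟨N+1, key N _ a ha ha.lt⟩


theorem CA_sem : ∀ (os : List (Option ℕ)) G q N, CA os G q N ↔
    ∃ c : List ℕ, (c.map some).Sublist os ∧ c.Pairwise (· < ·) ∧ (∀ a ∈ c, a < q) ∧
      ∃ K, N = c.length + K ∧ G (c.headD q) K := by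
  intro os
  induction os with
  | nil =>
    intro G q N
    simp only [CA]
    constructor
    · intro h; exact ⟨[], by simp, by simp, by simp, N, by simp, h⟩
    · rintro ⟨c, hc, _, _, K, h1, h2⟩
      have : c = [] := by simpa using hc
      subst this
      simp at h1 h2
      rw [h1]; exact h2
  | cons o os ih =>
    intro G q N
    cases o with
    | none =>
      simp only [CA]
      rw [ih]
      constructor
      · rintro ⟨c, hc, h⟩; exact ⟨c, hc.cons _, h⟩
      · rintro ⟨c, hc, h⟩
        refine ⟨c, ?_, h⟩
        cases c with
        | nil => simp
        | cons a c =>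
          rw [List.map_cons] at hc ⊢
          cases hc with
          | cons _ h => exact h
    | some x =>
      simp only [CA]
      rw [ih]
      constructor
      · rintro ⟨c, hc, hp, hq, K, rfl, h | ⟨hx, M, rfl, h⟩⟩
        · exact ⟨c, hc.cons _, hp, hq, K, rfl, h⟩
        · have hxc : ∀ a ∈ c, x < a := by
            cases c with
            | nil => simp
            | cons b c =>
              simp at hx hp ⊢
              exact ⟨hx, fun a ha => lt_trans hx (hp.1 a ha)⟩
          have hxq : x < q := by
            cases c with
            | nil => simpa using hx
            | cons b c => exact lt_trans hx (hq b (by simp))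
          refine ⟨x :: c, ?_, ?_, ?_, M, ?_, ?_⟩
          · rw [List.map_cons]; exact hc.cons_cons _
          · rw [List.pairwise_cons]; exact ⟨hxc, hp⟩
          · intro a ha
            rcases List.mem_cons.1 ha with rfl | ha
            · exact hxq
            · exact hq a ha
          · simp; omega
          · exact h
      · rintro ⟨c, hc, hp, hq, K, rfl, h⟩
        cases c with
        | nil => exact ⟨[], by simp, hp, hq, K, rfl, Or.inl h⟩
        | cons a c =>
          rw [List.map_cons] at hc
          cases hc with
          | cons _ h' => exact ⟨a :: c, by rw [List.map_cons]; exact h', hp, hq, K, rfl, Or.inl h⟩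
          | cons_cons _ h' =>
            rw [List.pairwise_cons] at hp
            refine ⟨c, h', hp.2, fun b hb => hq b (by simp [hb]), K + 1, by simp; omega, Or.inr ⟨?_, K, rfl, h⟩⟩
            cases c with
            | nil => exact hq x (by simp)
            | cons b c => exact hp.1 b (by simp)

theorem NI_sem : ∀ (os : List (Option ℕ)) q N, NI os q N ↔
    ∃ c : List ℕ, (c.map some).Sublist os ∧ c.Pairwise (· > ·) ∧ (∀ a ∈ c, a < q) ∧ N = c.length := by
  intro os
  induction os with
  | nil =>
    intro q N
    simp only [NI]
    constructor
    · rintro rfl; exact ⟨[], by simp⟩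
    · rintro ⟨c, hc, _, _, h⟩
      have : c = [] := by simpa using hc
      subst this
      exact h
  | cons o os ih =>
    intro q N
    cases o with
    | none =>
      simp only [NI]
      rw [ih]
      constructor
      · rintro ⟨c, hc, h⟩; exact ⟨c, hc.cons _, h⟩
      · rintro ⟨c, hc, h⟩
        refine ⟨c, ?_, h⟩
        cases c with
        | nil => simp
        | cons a c =>
          rw [List.map_cons] at hc ⊢
          cases hc with
          | cons _ h => exact h
    | some x =>
      simp only [NI, ih]
      constructor
      · rintro (⟨c, hc, hp, hq, rfl⟩ | ⟨hx, M, rfl, c, hc, hp, hq, rfl⟩)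
        · exact ⟨c, hc.cons _, hp, hq, rfl⟩
        · refine ⟨x :: c, ?_, ?_, ?_, by simp⟩
          · rw [List.map_cons]; exact hc.cons_cons _
          · rw [List.pairwise_cons]; exact ⟨hq, hp⟩
          · intro a ha
            rcases List.mem_cons.1 ha with rfl | ha
            · exact hx
            · exact lt_trans (hq a ha) hx
      · rintro ⟨c, hc, hp, hq, rfl⟩
        cases c with
        | nil => exact Or.inl ⟨[], by simp⟩
        | cons a c =>
          rw [List.map_cons] at hc
          cases hc with
          | cons _ h' => exact Or.inl ⟨a :: c, by rw [List.map_cons]; exact h', hp, hq, rfl⟩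
          | cons_cons _ h' =>
            rw [List.pairwise_cons] at hp
            exact Or.inr ⟨hq x (by simp), c.length, by simp, c, h', hp.2, hp.1, rfl⟩

end LPS

namespace LPS

/-- chains of arcs crossing a common cut, with left endpoints related by `r` -/
def Chain (r : ℕ → ℕ → Prop) (os : List (Option ℕ)) (k : ℕ) : Prop :=
  ∃ p, ∃ c : List ℕ, (c.map some).Sublist (os.drop p) ∧ c.Pairwise r ∧ (∀ a ∈ c, a < p) ∧ k = c.length

theorem Good.drop : ∀ (os : List (Option ℕ)) t p, Good t os → Good (t + p) (os.drop p) := by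
  intro os
  induction os with
  | nil => intro t p _; simp [Good]
  | cons o os ih =>
    intro t p h
    cases p with
    | zero => exact h
    | succ p =>
      have := ih (t+1) p h.2
      rw [List.drop_succ_cons]
      rwa [show t + (p + 1) = t + 1 + p by omega]

theorem exists_data (Q : (ℕ → ℕ) → Prop) : ∀ (os : List (Option ℕ)) t,
    (∃ d ∈ data t os, Q d.1) ↔ ∃ p, p < os.length ∧ Q (top (run (t + p) (os.drop p))) := by
  intro os
  induction os with
  | nil => intro t; simp [data]
  | cons o os ih =>
    intro t
    have hcons : ∃ d, d.1 = top (run t (o :: os)) ∧ data t (o :: os) = d :: data (t+1) os := by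
      cases o with
      | none => exact ⟨_, rfl, rfl⟩
      | some x => exact ⟨(_, _), rfl, rfl⟩
    obtain ⟨d, hd1, hd2⟩ := hcons
    rw [hd2]
    simp only [List.mem_cons, exists_eq_or_imp]
    rw [ih, hd1]
    constructor
    · rintro (h | ⟨p, hp, h⟩)
      · exact ⟨0, by simp, h⟩
      · refine ⟨p + 1, by simp; omega, ?_⟩
        rw [List.drop_succ_cons, show t + (p + 1) = t + 1 + p by omega]; exact h
    · rintro ⟨p, hp, h⟩
      cases p with
      | zero => exact Or.inl h
      | succ p =>
        right
        refine ⟨p, by simp at hp; omega, ?_⟩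
        rw [List.drop_succ_cons, show t + (p + 1) = t + 1 + p by omega] at h; exact h

theorem chain_exists (r : ℕ → ℕ → Prop) (os : List (Option ℕ)) (k : ℕ) (Q : (ℕ → ℕ) → Prop)
    (h : ∀ p, (∃ c : List ℕ, (c.map some).Sublist (os.drop p) ∧ c.Pairwise r ∧ (∀ a ∈ c, a < p) ∧
      k = c.length) ↔ k = 0 ∨ Q (top (run (0 + p) (os.drop p)))) :
    Chain r os k ↔ k = 0 ∨ ∃ d ∈ data 0 os, Q d.1 := by
  rw [exists_data]
  unfold Chain
  constructor
  · rintro ⟨p, c, hc⟩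
    by_cases hp : p < os.length
    · rcases (h p).1 ⟨c, hc⟩ with h1 | h1
      · exact Or.inl h1
      · exact Or.inr ⟨p, hp, h1⟩
    · rw [List.drop_eq_nil_of_le (by omega)] at hc
      have : c = [] := by simpa using hc.1
      subst this
      left; simpa using hc.2.2.2
  · rintro (rfl | ⟨p, hp, h1⟩)
    · exact ⟨0, [], by simp⟩
    · exact ⟨p, (h p).2 (Or.inr h1)⟩

theorem nest_data (os : List (Option ℕ)) (hg : Good 0 os) (k : ℕ) :
    Chain (· > ·) os k ↔ k = 0 ∨ ∃ d ∈ data 0 os, k ≤ d.1 0 := by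
  apply chain_exists _ _ _ (fun σ => k ≤ σ 0)
  intro p
  have := NI_iff _ _ (hg.drop os 0 p) p k (by omega)
  rw [NI_sem, lev_top _ _ (by rw [run_length]; omega)] at this
  rw [this, or_comm]

theorem cross_data (os : List (Option ℕ)) (hg : Good 0 os) (k : ℕ) :
    Chain (· < ·) os k ↔ k = 0 ∨ ∃ d ∈ data 0 os, 0 < d.1 (k - 1) := by
  apply chain_exists _ _ _ (fun σ => 0 < σ (k - 1))
  intro p
  have hG0 : Mono G0 := fun _ _ _ _ h => h
  have := CA_iff _ _ (hg.drop os 0 p) G0 hG0 (0 + p) k le_rfl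
  have h2 := act_G0 (run_valid (os.drop p) (0 + p)) k
  rw [run_length] at h2
  rw [h2, CA_sem] at this
  rw [← this]
  constructor
  · rintro ⟨c, h1, h2, h3, h4⟩
    exact ⟨c, h1, h2, by simpa using h3, 0, by simpa using h4, rfl⟩
  · rintro ⟨c, h1, h2, h3, K, h4, h5⟩
    refine ⟨c, h1, h2, by simpa using h3, ?_⟩
    simp only [G0] at h5; omega

theorem VD_mem : ∀ (ds : List Datum), VD ds → ∀ d ∈ ds, Shp d.1 := by
  intro ds
  induction ds with
  | nil => intro _ d h; simp at h
  | cons e ds ih =>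
    intro hV d h
    rcases List.mem_cons.1 h with rfl | h
    · exact VD_shp _ hV
    · exact ih hV.2.2.2 d h

/-- the relation between a word and its conjugate -/
def Conj (os os' : List (Option ℕ)) : Prop :=
  os'.length = os.length ∧ Good 0 os ∧ Good 0 os' ∧ data 0 os' = (data 0 os).map trD

theorem Conj.symm {os os' : List (Option ℕ)} (h : Conj os os') : Conj os' os := by
  obtain ⟨h1, h2, h3, h4⟩ := h
  exact ⟨h1.symm, h3, h2, by rw [h4, tr_tr_map _ (VD_data os 0 h2)]⟩

theorem Conj.unique {os os' os'' : List (Option ℕ)} (h : Conj os os') (h' : Conj os os'') :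
    os' = os'' :=
  word_inj _ _ h.2.2.1 h'.2.2.1 (by rw [h.2.2.2, h'.2.2.2])

theorem Conj.exists (os : List (Option ℕ)) (h : Good 0 os) : ∃ os', Conj os os' := by
  obtain ⟨os', h1, h2, h3⟩ := conj_word os h
  exact ⟨os', h1, h, h2, h3⟩

theorem Conj.isSome {os os' : List (Option ℕ)} (h : Conj os os') :
    os'.map Option.isSome = os.map Option.isSome := by
  rw [← map_isSome_data os' 0, h.2.2.2, map_isSome_tr, map_isSome_data]

theorem Conj.mem {os os' : List (Option ℕ)} (h : Conj os os') (k : ℕ) :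
    some k ∈ os' ↔ some k ∈ os := by
  apply mem_of_sdata os' os 0 h.2.2.1 h.2.1 _ k (Nat.zero_le _)
  rw [h.2.2.2, sdata_tr _ (VD_data os 0 h.2.1)]

theorem Conj.nest {os os' : List (Option ℕ)} (h : Conj os os') (k : ℕ) :
    Chain (· > ·) os' k ↔ Chain (· < ·) os k := by
  rw [nest_data _ h.2.2.1, cross_data _ h.2.1, h.2.2.2]
  have hV := VD_mem _ (VD_data os 0 h.2.1)
  rcases k with _ | k
  · simp
  · simp only [List.mem_map, exists_exists_and_eq_and]
    simp only [Nat.add_eq_zero_iff, one_ne_zero, and_false, false_or, Nat.add_sub_cancel]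
    constructor
    · rintro ⟨d, hd, h⟩
      exact ⟨d, hd, (conj_spec (hV d hd) k 0).1 h⟩
    · rintro ⟨d, hd, h⟩
      exact ⟨d, hd, (conj_spec (hV d hd) k 0).2 h⟩

theorem Conj.cross {os os' : List (Option ℕ)} (h : Conj os os') (k : ℕ) :
    Chain (· < ·) os' k ↔ Chain (· > ·) os k := (h.symm.nest k).symm

end LPS

namespace LPS

theorem Good_iff : ∀ (os : List (Option ℕ)) (t : ℕ),
    Good t os ↔ ∀ j x, os[j]? = some (some x) → x < t + j := by
  intro os
  induction os with
  | nil => intro t; simp [Good]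
  | cons o os ih =>
    intro t
    simp only [Good, ih]
    constructor
    · rintro ⟨h1, h2⟩ j x h
      rcases j with _ | j
      · simp at h; exact h1 x h
      · simp at h; have := h2 j x h; omega
    · intro h
      refine ⟨fun x hx => by simpa using h 0 x (by simp [hx]), fun j x hx => ?_⟩
      have := h (j+1) x (by simpa using hx)
      omega

variable {n : ℕ}

def Enc (P : LinkedPartition n) (os : List (Option ℕ)) : Prop :=
  os.length = n ∧ Good 0 os ∧
    ∀ i j : Fin n, (i, j) ∈ P.stdRep ↔ os[j.val]? = some (some i.val)

theorem parent_unique (P : LinkedPartition n) (i i' j : Fin n)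
    (h : (i, j) ∈ P.stdRep) (h' : (i', j) ∈ P.stdRep) : i = i' := by
  obtain ⟨B, hB, h1, h2, h3, h4⟩ := h
  obtain ⟨C, hC, g1, g2, g3, g4⟩ := h'
  simp only at *
  by_cases hBC : B = C
  · subst hBC
    exact le_antisymm (h3 _ g1) (g3 _ h1)
  · rcases P.nearlyDisjoint B hB C hC hBC j (Finset.mem_inter.2 ⟨h2, g2⟩) with h | h
    · exact absurd (h.1 _ h1) (not_le.2 h4)
    · exact absurd (h.1 _ g1) (not_le.2 g4)

theorem stdRep_lt (P : LinkedPartition n) (i j : Fin n) (h : (i, j) ∈ P.stdRep) : i < j := by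
  obtain ⟨B, hB, h1, h2, h3, h4⟩ := h
  exact h4

theorem Enc_exists (P : LinkedPartition n) : ∃ os, Enc P os := by
  classical
  let par : Fin n → Option ℕ := fun j =>
    if h : ∃ i, (i, j) ∈ P.stdRep then some (h.choose).val else none
  have key : ∀ i j : Fin n, (i, j) ∈ P.stdRep ↔ (List.ofFn par)[j.val]? = some (some i.val) := by
    intro i j
    have e : (List.ofFn par)[j.val]? = some (par j) := by simp
    rw [e, Option.some_inj]
    by_cases h : ∃ i, (i, j) ∈ P.stdRep
    · simp only [par, dif_pos h, Option.some_inj]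
      constructor
      · intro hi
        rw [parent_unique P i _ j hi h.choose_spec]
      · intro hi
        rw [← Fin.ext hi]
        exact h.choose_spec
    · simp only [par, dif_neg h]
      simp only [reduceCtorEq, iff_false]
      exact fun hi => h ⟨i, hi⟩
  refine ⟨List.ofFn par, by simp, ?_, key⟩
  rw [Good_iff]
  intro j x hx
  have hj : j < n := by
    have := (List.getElem?_eq_some_iff.1 hx).1
    simpa using this
  have e : (List.ofFn par)[j]? = some (par ⟨j, hj⟩) := by simp [hj]
  rw [e, Option.some_inj] at hx
  by_cases h : ∃ i, (i, (⟨j, hj⟩ : Fin n)) ∈ P.stdRep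
  · simp only [par, dif_pos h, Option.some_inj] at hx
    have := stdRep_lt P _ _ h.choose_spec
    rw [Fin.lt_def, hx] at this
    simpa using this
  · simp only [par, dif_neg h] at hx
    simp at hx

theorem Enc_word {P : LinkedPartition n} {os os' : List (Option ℕ)}
    (h : Enc P os) (h' : Enc P os') : os = os' := by
  have aux : ∀ os os' : List (Option ℕ), Enc P os → Enc P os' → ∀ j x : ℕ,
      os[j]? = some (some x) → os'[j]? = some (some x) := by
    intro os os' h h' j x hx
    have hj : j < n := by
      have := (List.getElem?_eq_some_iff.1 hx).1
      rw [h.1] at this; exact this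
    have hxj := (Good_iff os 0).1 h.2.1 j x hx
    have := (h.2.2 ⟨x, by omega⟩ ⟨j, hj⟩).2 hx
    exact (h'.2.2 _ _).1 this
  apply List.ext_getElem?
  intro j
  by_cases hj : j < n
  · have e1 : os[j]? = some (os[j]'(by rw [h.1]; exact hj)) := by simp
    have e2 : os'[j]? = some (os'[j]'(by rw [h'.1]; exact hj)) := by simp
    rcases ho : os[j]'(by rw [h.1]; exact hj) with _ | x
    · rcases ho' : os'[j]'(by rw [h'.1]; exact hj) with _ | x
      · rw [e1, e2, ho, ho']
      · rw [ho'] at e2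
        have := aux os' os h' h j x e2
        rw [e1, ho] at this
        simp at this
    · rw [ho] at e1
      rw [e1, aux os os' h h' j x e1]
  · rw [List.getElem?_eq_none (by rw [h.1]; omega), List.getElem?_eq_none (by rw [h'.1]; omega)]

theorem same_min (P : LinkedPartition n) {B C : Finset (Fin n)} (hB : B ∈ P.blocks)
    (hC : C ∈ P.blocks) (i : Fin n) (h1 : i ∈ B) (h2 : i ∈ C) (h3 : ∀ b ∈ B, i ≤ b)
    (h4 : ∀ b ∈ C, i ≤ b) : B = C := by
  by_contra hBC
  rcases P.nearlyDisjoint B hB C hC hBC i (Finset.mem_inter.2 ⟨h1, h2⟩) with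
    ⟨_, _, c, hc, hlt⟩ | ⟨_, _, c, hc, hlt⟩
  · exact absurd (h4 c hc) (not_le.2 hlt)
  · exact absurd (h3 c hc) (not_le.2 hlt)

theorem blocks_sub (P Q : LinkedPartition n) (h : P.stdRep = Q.stdRep) :
    P.blocks ⊆ Q.blocks := by
  -- membership in a block with given minimum
  have mem_iff : ∀ (R : LinkedPartition n) (B : Finset (Fin n)), B ∈ R.blocks → ∀ i ∈ B,
      (∀ b ∈ B, i ≤ b) → ∀ j, j ∈ B ↔ j = i ∨ (i, j) ∈ R.stdRep := by
    intro R B hB i hi hmin j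
    constructor
    · intro hj
      rcases eq_or_lt_of_le (hmin j hj) with e | e
      · exact Or.inl e.symm
      · exact Or.inr ⟨B, hB, hi, hj, hmin, e⟩
    · rintro (rfl | ⟨C, hC, h1, h2, h3, h4⟩)
      · exact hi
      · rw [same_min R hB hC i hi h1 hmin h3]
        exact h2
  intro B hB
  obtain ⟨i, hi, hmin⟩ := B.exists_min_image id (P.nonempty B hB)
  simp only [id] at hmin
  by_cases hj : ∃ j, (i, j) ∈ P.stdRep
  · obtain ⟨j, hj⟩ := hj
    have hj2 := hj
    rw [h] at hj2
    obtain ⟨C, hC, h1, h2, h3, h4⟩ := hj2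
    have : B = C := by
      ext k
      rw [mem_iff P B hB i hi hmin, mem_iff Q C hC i h1 h3, h]
    rw [this]; exact hC
  · obtain ⟨C, hC, h1⟩ := Q.cover i
    obtain ⟨m, hm, hmin'⟩ := C.exists_min_image id (Q.nonempty C hC)
    simp only [id] at hmin'
    by_cases hmi : m = i
    · subst hmi
      have : B = C := by
        ext k
        rw [mem_iff P B hB m hi hmin, mem_iff Q C hC m h1 hmin', h]
      rw [this]; exact hC
    · exfalso
      have hlt : m < i := lt_of_le_of_ne (hmin' i h1) hmi
      have hst : (m, i) ∈ P.stdRep := by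
        rw [h]; exact ⟨C, hC, hm, h1, hmin', hlt⟩
      obtain ⟨D, hD, g1, g2, g3, g4⟩ := hst
      simp only at g1 g2 g3 g4
      have hBD : B ≠ D := by
        rintro rfl
        exact absurd (hmin m g1) (not_le.2 hlt)
      rcases P.nearlyDisjoint B hB D hD hBD i (Finset.mem_inter.2 ⟨hi, g2⟩) with
        ⟨_, hc, _⟩ | ⟨hc, _⟩
      · obtain ⟨b, hb, hne⟩ := Finset.exists_mem_ne hc i
        rcases (mem_iff P B hB i hi hmin b).1 hb with e | e
        · exact hne e
        · exact hj ⟨b, e⟩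
      · exact absurd (hc m g1) (not_le.2 hlt)

theorem Enc_part {P Q : LinkedPartition n} {os : List (Option ℕ)}
    (h : Enc P os) (h' : Enc Q os) : P = Q := by
  have e : P.stdRep = Q.stdRep := by
    ext ⟨i, j⟩
    rw [h.2.2, h'.2.2]
  have hb : P.blocks = Q.blocks :=
    Finset.Subset.antisymm (blocks_sub P Q e) (blocks_sub Q P e.symm)
  cases P; cases Q
  simp only at hb
  subst hb
  rfl

theorem Enc_of_word (os : List (Option ℕ)) (hl : os.length = n) (hg : Good 0 os) :
    ∃ P : LinkedPartition n, Enc P os := by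
  classical
  have hg' := (Good_iff os 0).1 hg
  simp only [zero_add] at hg'
  let blk : Fin n → Finset (Fin n) := fun i =>
    Finset.univ.filter (fun j => j = i ∨ os[j.val]? = some (some i.val))
  have hmem : ∀ i j, j ∈ blk i ↔ j = i ∨ os[j.val]? = some (some i.val) := by
    intro i j; simp [blk]
  have hself : ∀ i, i ∈ blk i := fun i => (hmem i i).2 (Or.inl rfl)
  have hmin : ∀ i, ∀ b ∈ blk i, i ≤ b := by
    intro i b hb
    rcases (hmem i b).1 hb with rfl | h
    · exact le_rfl
    · exact le_of_lt (Fin.lt_def.2 (hg' _ _ h))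
  let ok : Fin n → Prop := fun i =>
    (∃ j : Fin n, os[j.val]? = some (some i.val)) ∨ os[i.val]? = some none
  let blocks : Finset (Finset (Fin n)) := (Finset.univ.filter ok).image blk
  have hblocks : ∀ B, B ∈ blocks ↔ ∃ i, ok i ∧ blk i = B := by
    intro B; simp [blocks]
  -- one half of near disjointness
  have half : ∀ i k t : Fin n, ok i → i ≠ k → t = i → t ∈ blk k →
      (∀ b ∈ blk i, t ≤ b) ∧ 1 < (blk i).card ∧ ∃ c ∈ blk k, c < t := by
    rintro i k t hok hne rfl ht
    have hk : os[t.val]? = some (some k.val) := by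
      rcases (hmem k t).1 ht with e | e
      · exact absurd e hne
      · exact e
    refine ⟨hmin t, ?_, k, hself k, Fin.lt_def.2 (hg' _ _ hk)⟩
    rcases hok with ⟨j, hj⟩ | h
    · rw [Finset.one_lt_card]
      refine ⟨t, hself t, j, (hmem t j).2 (Or.inr hj), ?_⟩
      have := hg' _ _ hj
      rintro rfl
      omega
    · rw [hk] at h; simp at h
  let P : LinkedPartition n :=
    { blocks := blocks
      nonempty := by
        intro B hB
        obtain ⟨i, _, rfl⟩ := (hblocks B).1 hB
        exact ⟨i, hself i⟩
      cover := by
        intro i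
        have e1 : os[i.val]? = some (os[i.val]'(by rw [hl]; exact i.2)) := by simp
        rcases ho : os[i.val]'(by rw [hl]; exact i.2) with _ | x
        · rw [ho] at e1
          exact ⟨blk i, (hblocks _).2 ⟨i, Or.inr e1, rfl⟩, hself i⟩
        · rw [ho] at e1
          have hx := hg' _ _ e1
          let k : Fin n := ⟨x, lt_trans hx i.2⟩
          exact ⟨blk k, (hblocks _).2 ⟨k, Or.inl ⟨i, e1⟩, rfl⟩, (hmem k i).2 (Or.inr e1)⟩
      nearlyDisjoint := by
        intro B hB C hC hBC t ht
        obtain ⟨i, hi, rfl⟩ := (hblocks B).1 hB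
        obtain ⟨k, hk, rfl⟩ := (hblocks C).1 hC
        have hik : i ≠ k := by rintro rfl; exact hBC rfl
        obtain ⟨ht1, ht2⟩ := Finset.mem_inter.1 ht
        rcases (hmem i t).1 ht1 with e | e
        · exact Or.inl (half i k t hi hik e ht2)
        · rcases (hmem k t).1 ht2 with e' | e'
          · exact Or.inr (half k i t hk hik.symm e' ht1)
          · rw [e] at e'
            simp only [Option.some_inj] at e'
            exact absurd (Fin.ext e') hik }
  refine ⟨P, hl, hg, ?_⟩
  intro i j
  constructor
  · rintro ⟨B, hB, h1, h2, h3, h4⟩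
    simp only at h1 h2 h3 h4
    obtain ⟨k, hk, rfl⟩ := (hblocks B).1 hB
    have hki : k = i := le_antisymm (hmin k i h1) (h3 k (hself k))
    subst hki
    rcases (hmem k j).1 h2 with e | e
    · exact absurd e (ne_of_gt h4)
    · exact e
  · intro h
    exact ⟨blk i, (hblocks _).2 ⟨i, Or.inl ⟨j, h⟩, rfl⟩, hself i, (hmem i j).2 (Or.inr h),
      hmin i, Fin.lt_def.2 (hg' _ _ h)⟩

theorem Enc_compl {P : LinkedPartition n} {os : List (Option ℕ)} (h : Enc P os) (i : Fin n) :
    i ∈ P.compl ↔ some i.val ∈ os := by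
  have : i ∈ P.compl ↔ ∃ j, (i, j) ∈ P.stdRep := Iff.rfl
  rw [this, List.mem_iff_getElem?]
  constructor
  · rintro ⟨j, hj⟩
    exact ⟨j.val, (h.2.2 i j).1 hj⟩
  · rintro ⟨j, hj⟩
    have hjn : j < n := by
      have := (List.getElem?_eq_some_iff.1 hj).1
      rw [h.1] at this; exact this
    exact ⟨⟨j, hjn⟩, (h.2.2 i ⟨j, hjn⟩).2 hj⟩

theorem Enc_compr {P : LinkedPartition n} {os : List (Option ℕ)} (h : Enc P os) (j : Fin n) :
    j ∈ P.compr ↔ (os.map Option.isSome)[j.val]? = some true := by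
  have : j ∈ P.compr ↔ ∃ i, (i, j) ∈ P.stdRep := Iff.rfl
  rw [this, List.getElem?_map, Option.map_eq_some_iff]
  constructor
  · rintro ⟨i, hi⟩
    exact ⟨some i.val, (h.2.2 i j).1 hi, rfl⟩
  · rintro ⟨o, ho, hs⟩
    obtain ⟨x, rfl⟩ := Option.isSome_iff_exists.1 hs
    have hx := (Good_iff os 0).1 h.2.1 _ _ ho
    exact ⟨⟨x, by omega⟩, (h.2.2 ⟨x, by omega⟩ j).2 ho⟩

theorem Enc_chain {P : LinkedPartition n} {os : List (Option ℕ)} (h : Enc P os)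
    (r : ℕ → ℕ → Prop) (k : ℕ) :
    Chain r os k ↔ ∃ f : Fin k → Fin n × Fin n, (∀ a, f a ∈ P.stdRep) ∧
      (∀ a b, a < b → r (f a).1.val (f b).1.val) ∧ StrictMono (fun a => (f a).2) ∧
      ∀ a b : Fin k, (f a).1 < (f b).2 := by
  constructor
  · rintro ⟨p, c, hs, hp, hlt, rfl⟩
    rw [List.sublist_iff_exists_orderEmbedding_getElem?_eq] at hs
    obtain ⟨e, he⟩ := hs
    have hea : ∀ a : Fin c.length, os[p + e a.val]? = some (some (c.get a)) := by
      intro a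
      have := he a.val
      rw [List.getElem?_drop] at this
      rw [← this]
      simp
    have hn : ∀ a : Fin c.length, p + e a.val < n := by
      intro a
      have := (List.getElem?_eq_some_iff.1 (hea a)).1
      rw [h.1] at this; exact this
    have hc : ∀ a : Fin c.length, c.get a < p := fun a => hlt _ (List.get_mem _ _)
    refine ⟨fun a => (⟨c.get a, by have := hn a; have := hc a; omega⟩, ⟨p + e a.val, hn a⟩),
      ?_, ?_, ?_, ?_⟩
    · intro a
      exact (h.2.2 _ _).2 (hea a)
    · intro a b hab
      exact List.pairwise_iff_getElem.1 hp a.val b.val a.2 b.2 hab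
    · intro a b hab
      have : e a.val < e b.val := e.lt_iff_lt.2 hab
      simp only [Fin.lt_def]
      omega
    · intro a b
      have := hc a
      simp only [Fin.lt_def]
      omega
  · rintro ⟨f, h1, h2, h3, h4⟩
    rcases k with _ | k
    · exact ⟨0, [], by simp, by simp, by simp, rfl⟩
    · refine ⟨(f 0).2.val, List.ofFn (fun a => (f a).1.val), ?_, ?_, ?_, by simp⟩
      · rw [List.sublist_iff_exists_fin_orderEmbedding_get_eq]
        have hge : ∀ a, (f 0).2.val ≤ (f a).2.val := fun a =>
          Fin.le_def.1 (h3.monotone (Fin.zero_le a))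
        have hL : (List.map some (List.ofFn (fun a => (f a).1.val))).length = k + 1 := by simp
        have hL2 : (List.drop (f 0).2.val os).length = n - (f 0).2.val := by simp [h.1]
        refine ⟨OrderEmbedding.ofStrictMono (fun a => ⟨(f (Fin.cast hL a)).2.val - (f 0).2.val, by
          rw [hL2]; have := hge (Fin.cast hL a); omega⟩) ?_, ?_⟩
        · intro a b hab
          have := Fin.lt_def.1 (h3 (show Fin.cast hL a < Fin.cast hL b from hab))
          have := hge (Fin.cast hL a)
          simp only [Fin.lt_def] at *
          omega
        · intro a
          have ha := (h.2.2 _ _).1 (h1 (Fin.cast hL a))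
          have := hge (Fin.cast hL a)
          have hb := (List.getElem?_eq_some_iff.1 ha).2
          simp only [List.get_eq_getElem, List.getElem_map, List.getElem_ofFn, List.getElem_drop]
          refine Eq.trans hb.symm (getElem_congr_idx ?_)
          change _ = (f 0).2.val + ((f (Fin.cast hL a)).2.val - (f 0).2.val)
          omega
      · rw [List.pairwise_ofFn]
        exact fun a b hab => h2 a b hab
      · intro a ha
        obtain ⟨b, rfl⟩ := List.mem_ofFn.1 ha
        exact Fin.lt_def.1 (h4 b 0)

theorem Enc_cross {P : LinkedPartition n} {os : List (Option ℕ)} (h : Enc P os) :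
    P.cross = sSup {k | Chain (· < ·) os k} := by
  unfold LinkedPartition.cross
  congr 1
  ext k
  simp only [Set.mem_ofPred_eq]
  rw [Enc_chain h]
  constructor
  · rintro ⟨f, h1, h2, h3, h4⟩
    exact ⟨f, h1, fun a b hab => h2 hab, h3, h4⟩
  · rintro ⟨f, h1, h2, h3, h4⟩
    exact ⟨f, h1, fun a b hab => h2 a b hab, h3, h4⟩

theorem Enc_nest {P : LinkedPartition n} {os : List (Option ℕ)} (h : Enc P os) :
    P.nest = sSup {k | Chain (· > ·) os k} := by
  unfold LinkedPartition.nest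
  congr 1
  ext k
  simp only [Set.mem_ofPred_eq]
  rw [Enc_chain h]
  constructor
  · rintro ⟨f, h1, h2, h3, h4⟩
    exact ⟨fun a => f a.rev, fun a => h1 _, fun a b hab => h2 (Fin.rev_lt_rev.2 hab),
      fun a b hab => h3 (Fin.rev_lt_rev.2 hab), fun a b => h4 _ _⟩
  · rintro ⟨f, h1, h2, h3, h4⟩
    exact ⟨fun a => f a.rev, fun a => h1 _, fun a b hab => h2 _ _ (Fin.rev_lt_rev.2 hab),
      fun a b hab => h3 (Fin.rev_lt_rev.2 hab), fun a b => h4 _ _⟩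

/-- conjugate linked partitions -/
def Rel (P Q : LinkedPartition n) : Prop := ∃ os os', Enc P os ∧ Enc Q os' ∧ Conj os os'

theorem Rel.symm {P Q : LinkedPartition n} (h : Rel P Q) : Rel Q P := by
  obtain ⟨os, os', h1, h2, h3⟩ := h
  exact ⟨os', os, h2, h1, h3.symm⟩

theorem Rel.unique {P Q R : LinkedPartition n} (h : Rel P Q) (h' : Rel P R) : Q = R := by
  obtain ⟨os, os', h1, h2, h3⟩ := h
  obtain ⟨qs, qs', g1, g2, g3⟩ := h'
  have e := Enc_word h1 g1
  subst e
  have e := h3.unique g3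
  subst e
  exact Enc_part h2 g2

theorem Rel.exists (P : LinkedPartition n) : ∃ Q, Rel P Q := by
  obtain ⟨os, h⟩ := Enc_exists P
  obtain ⟨os', h'⟩ := Conj.exists os h.2.1
  obtain ⟨Q, hQ⟩ := Enc_of_word (n := n) os' (h'.1.trans h.1) h'.2.2.1
  exact ⟨Q, os, os', h, hQ, h'⟩

theorem Rel.stats {P Q : LinkedPartition n} (h : Rel P Q) :
    Q.cross = P.nest ∧ Q.nest = P.cross ∧ Q.compl = P.compl ∧ Q.compr = P.compr := by
  obtain ⟨os, os', h1, h2, h3⟩ := h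
  refine ⟨?_, ?_, ?_, ?_⟩
  · rw [Enc_cross h2, Enc_nest h1]
    congr 1; ext k; exact h3.cross k
  · rw [Enc_nest h2, Enc_cross h1]
    congr 1; ext k; exact h3.nest k
  · ext i; rw [Enc_compl h2, Enc_compl h1, h3.mem]
  · ext j; rw [Enc_compr h2, Enc_compr h1, h3.isSome]

end LPS

/-- The number of linked partitions of `[n]` with crossing number `x`, nesting
number `y`, left-component set `S` and right-component set `T` equals the number
with crossing number `y`, nesting number `x` and the same component sets. -/
theorem linkedPartition_symmetry (n x y : ℕ) (S T : Set (Fin n)) :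
    {P : LinkedPartition n |
        P.cross = x ∧ P.nest = y ∧ P.compl = S ∧ P.compr = T}.ncard =
    {P : LinkedPartition n |
        P.cross = y ∧ P.nest = x ∧ P.compl = S ∧ P.compr = T}.ncard := by
  choose F hF using fun P : LinkedPartition n => LPS.Rel.exists P
  refine Set.ncard_congr (fun P _ => F P) ?_ ?_ ?_
  · rintro P ⟨h1, h2, h3, h4⟩
    obtain ⟨g1, g2, g3, g4⟩ := (hF P).stats
    exact ⟨g1.trans h2, g2.trans h1, g3.trans h3, g4.trans h4⟩
  · intro P Q _ _ h
    have hQ := hF Q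
    change F P = F Q at h
    rw [← h] at hQ
    exact (hF P).symm.unique hQ.symm
  · rintro Q ⟨h1, h2, h3, h4⟩
    obtain ⟨g1, g2, g3, g4⟩ := (hF Q).stats
    exact ⟨F Q, ⟨g1.trans h2, g2.trans h1, g3.trans h3, g4.trans h4⟩,
      (hF (F Q)).unique (hF Q).symm⟩
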